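/- arXiv:1403.2527 — 2 statements merged into one kernel-verified Lean document; each statement's English description precedes it below -/
import Mathlib

section
/- Suppose the optimal value f* of the auxiliary linear program satisfies f* > 0, and assumptions (D1) and (D2) on the recharge rates hold. Then for every δ > 0, lim_{e0 → ∞} P( N_opt is finite and |N_opt / (e0/(τ f*)) − 1| < δ ) = 1. -/
open MeasureTheory Filter Finset Matrix

/-- Available energy of base station `m` at the end of slot `n`:
`e^(n) = e0·u + τ·Σ_{t=1}^n s^(t) − τ·C·Σ_{t=1}^n v^(t)`. -/
noncomputable def energyVec {M : ℕ} (τ : ℝ) (C : Matrix (Fin M) (Fin M) ℝ)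
    (e0 : ℝ) (s v : ℕ → Fin M → ℝ) (n : ℕ) (m : Fin M) : ℝ :=
  e0 + τ * (∑ t ∈ Finset.Icc 1 n, s t m)
    - τ * C.mulVec (∑ t ∈ Finset.Icc 1 n, v t) m

/-- A decision vector: entries in `{0,1}` with exactly one `1` (i.e. `uᵀv = 1`). -/
def IsDecision {M : ℕ} (v : Fin M → ℝ) : Prop :=
  (∀ m, v m = 0 ∨ v m = 1) ∧ (∑ m, v m) = 1

/-- The optimal lifetime: the supremum in `ℕ ∪ {∞}` of those `N` for which some
sequence of decision vectors keeps all available energies nonnegative up to slot `N`. -/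
noncomputable def Nopt {M : ℕ} (τ : ℝ) (C : Matrix (Fin M) (Fin M) ℝ)
    (e0 : ℝ) (s : ℕ → Fin M → ℝ) : ℕ∞ :=
  sSup {x : ℕ∞ | ∃ N : ℕ, x = (N : ℕ∞) ∧ ∃ v : ℕ → Fin M → ℝ,
    (∀ t, IsDecision (v t)) ∧
    ∀ n, 1 ≤ n → n ≤ N → ∀ m, 0 ≤ energyVec τ C e0 s v n m}

/-!
Write the energy of station `m` after `n` slots as `e0 - τ (R ∑ v) m`, with `R = C - s̄ uᵀ`, plus
`τ` times the fluctuation of the recharge sum around `n s̄ m`. A sum of `n` decisions is `n` times a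
feasible point of the linear program, so whatever the decisions, `R ∑ v` has a coordinate which is
at least `n f*`: up to fluctuations, nobody survives beyond slot `e0 / (τ f*)`. Conversely, choosing
greedily the station that lags most behind an optimal point makes every coordinate of `R ∑ v` at
most `n f* + o(n)`, so this slot is reached up to lower order terms.

By (D1) the recharge rates of a station are uncorrelated with common mean, and by (D2) they are
nonnegative with bounded variance, which is enough for the strong law of large numbers: almost
surely the fluctuations are `o(n)`, and `N_opt / (e0 / (τ f*)) → 1`.
-/

section StrongLaw

open ProbabilityTheory
open scoped Topology

theorem tendsto_measure_of_ae_eventually_mem {Ω ι : Type*} {m0 : MeasurableSpace Ω}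
    {μ : Measure Ω} [Preorder ι] [IsDirectedOrder ι] [Nonempty ι]
    [(atTop : Filter ι).IsCountablyGenerated] {A : ι → Set Ω}
    (h : ∀ᵐ ω ∂μ, ∀ᶠ i in atTop, ω ∈ A i) :
    Tendsto (fun i ↦ μ (A i)) atTop (𝓝 (μ Set.univ)) := by
  let B : ι → Set Ω := fun i ↦ {ω | ∀ j ≥ i, ω ∈ A j}
  have hB_mono : Monotone B := fun i j hij ω hω k hk ↦ hω k (hij.trans hk)
  have hB_iUnion : μ (⋃ i, B i) = μ Set.univ := by
    refine measure_congr (eventuallyEq_univ.2 ?_)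
    filter_upwards [h] with ω hω
    exact Set.mem_iUnion.2 (eventually_atTop.1 hω)
  exact tendsto_of_tendsto_of_tendsto_of_le_of_le
    (hB_iUnion ▸ tendsto_measure_iUnion_atTop hB_mono) tendsto_const_nhds
    (fun i ↦ measure_mono fun ω (hω : ω ∈ B i) ↦ hω i le_rfl)
    (fun i ↦ measure_mono (Set.subset_univ _))

theorem ae_tendsto_zero_of_tsum_lintegral_ne_top {Ω : Type*} {m0 : MeasurableSpace Ω}
    {μ : Measure Ω} {f : ℕ → Ω → ENNReal} (hf : ∀ n, AEMeasurable (f n) μ)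
    (hsum : ∑' n, ∫⁻ ω, f n ω ∂μ ≠ ⊤) :
    ∀ᵐ ω ∂μ, Tendsto (fun n ↦ f n ω) atTop (𝓝 0) := by
  rw [← lintegral_tsum hf] at hsum
  filter_upwards [ae_lt_top' (AEMeasurable.tsum hf) hsum] with ω hω
  exact ENNReal.tendsto_atTop_zero_of_tsum_ne_top hω.ne

theorem tendsto_div_of_monotone_of_tendsto_sq {u : ℕ → ℝ} {l : ℝ} (hu : Monotone u)
    (h : Tendsto (fun k : ℕ ↦ u (k ^ 2) / (k ^ 2 : ℕ)) atTop (𝓝 l)) :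
    Tendsto (fun n : ℕ ↦ u n / n) atTop (𝓝 l) := by
  refine tendsto_div_of_monotone_of_exists_subseq_tendsto_div u l hu fun a ha ↦
    ⟨fun k ↦ k ^ 2, ?_, tendsto_pow_atTop two_ne_zero, h⟩
  have hratio : Tendsto (fun k : ℕ ↦ (1 + 1 / (k : ℝ)) ^ 2) atTop (𝓝 1) := by
    simpa using (tendsto_one_div_atTop_nhds_zero_nat.const_add (1 : ℝ)).pow 2
  filter_upwards [hratio.eventually_le_const ha, eventually_gt_atTop 0] with k hk hk_pos
  calc (((k + 1) ^ 2 : ℕ) : ℝ) = (1 + 1 / (k : ℝ)) ^ 2 * (k ^ 2 : ℕ) := by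
        push_cast; field_simp
    _ ≤ a * (k ^ 2 : ℕ) := by gcongr

section Variance

variable {Ω : Type*} {m0 : MeasurableSpace Ω} {μ : Measure Ω}

theorem ae_tendsto_sub_integral_of_summable_variance [IsFiniteMeasure μ] {Y : ℕ → Ω → ℝ}
    (hY : ∀ n, MemLp (Y n) 2 μ) (hsum : Summable fun n ↦ Var[Y n; μ]) :
    ∀ᵐ ω ∂μ, Tendsto (fun n ↦ Y n ω - ∫ ω', Y n ω' ∂μ) atTop (𝓝 0) := by
  have hsq : ∀ᵐ ω ∂μ, Tendsto (fun n ↦ ‖Y n ω - ∫ ω', Y n ω' ∂μ‖ₑ ^ 2) atTop (𝓝 0) := by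
    refine ae_tendsto_zero_of_tsum_lintegral_ne_top (fun n ↦ ?_) ?_
    · exact ((hY n).aestronglyMeasurable.aemeasurable.sub_const _).enorm.pow_const 2
    · change ∑' n, eVar[Y n; μ] ≠ ⊤
      simpa only [← ofReal_variance (hY _)] using hsum.tsum_ofReal_ne_top
  filter_upwards [hsq] with ω hω
  rw [tendsto_zero_iff_enorm_tendsto_zero]
  have hsqrt (x : ENNReal) : (x ^ 2) ^ (2⁻¹ : ℝ) = x := by
    rw [← ENNReal.rpow_natCast, ← ENNReal.rpow_mul]; norm_num
  simpa [hsqrt] using hω.ennrpow_const 2⁻¹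

theorem variance_sum_of_pairwise_covariance_eq_zero {ι : Type*} [IsFiniteMeasure μ]
    {X : ι → Ω → ℝ} {t : Finset ι} (hX : ∀ i ∈ t, MemLp (X i) 2 μ)
    (hcov : (t : Set ι).Pairwise fun i j ↦ cov[X i, X j; μ] = 0) :
    Var[∑ i ∈ t, X i; μ] = ∑ i ∈ t, Var[X i; μ] := by
  rw [variance_sum' hX]
  refine sum_congr rfl fun i hi ↦ ?_
  rw [sum_eq_single_of_mem i hi fun j hj hji ↦ hcov hi hj hji.symm,
    covariance_self (hX i hi).aestronglyMeasurable.aemeasurable]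

theorem variance_average_le_of_pairwise_covariance_eq_zero [IsFiniteMeasure μ] {X : ℕ → Ω → ℝ}
    {V : ℝ} (hX : ∀ i, MemLp (X i) 2 μ) (hvar : ∀ i, Var[X i; μ] ≤ V)
    (hcov : Pairwise fun i j ↦ cov[X i, X j; μ] = 0) (n : ℕ) :
    Var[fun ω ↦ (∑ i ∈ range n, X i ω) / n; μ] ≤ V / n := by
  have hfun : (fun ω ↦ (∑ i ∈ range n, X i ω) / n)
      = fun ω ↦ (n : ℝ)⁻¹ * (∑ i ∈ range n, X i) ω := by
    ext ω; rw [Finset.sum_apply, div_eq_inv_mul]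
  rw [hfun, variance_const_mul, variance_sum_of_pairwise_covariance_eq_zero (fun i _ ↦ hX i)
    (hcov.set_pairwise _)]
  calc ((n : ℝ)⁻¹) ^ 2 * ∑ i ∈ range n, Var[X i; μ]
      ≤ ((n : ℝ)⁻¹) ^ 2 * ∑ _i ∈ range n, V := by gcongr with i; exact hvar i
    _ = V / n := by
      rcases n.eq_zero_or_pos with rfl | hn
      · simp
      · rw [sum_const, card_range, nsmul_eq_mul]; field_simp

/- The variances of the averages are summable only along the squares; nonnegativity makes the
partial sums monotone, which fills the gaps. -/
theorem ae_tendsto_average_of_pairwise_covariance_eq_zero [IsProbabilityMeasure μ]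
    {X : ℕ → Ω → ℝ} {c V : ℝ} (hnonneg : ∀ i, 0 ≤ᵐ[μ] X i) (hX : ∀ i, MemLp (X i) 2 μ)
    (hmean : ∀ i, ∫ ω, X i ω ∂μ = c) (hvar : ∀ i, Var[X i; μ] ≤ V)
    (hcov : Pairwise fun i j ↦ cov[X i, X j; μ] = 0) :
    ∀ᵐ ω ∂μ, Tendsto (fun n : ℕ ↦ (∑ i ∈ range n, X i ω) / n) atTop (𝓝 c) := by
  let avg : ℕ → Ω → ℝ := fun n ω ↦ (∑ i ∈ range n, X i ω) / n
  have havg : ∀ n, MemLp (avg n) 2 μ := fun n ↦ by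
    simpa only [avg, div_eq_inv_mul] using (memLp_finsetSum _ fun i _ ↦ hX i).const_mul (n : ℝ)⁻¹
  have havg_mean : ∀ n ≠ 0, ∫ ω, avg n ω ∂μ = c := fun n hn ↦ by
    simp only [avg]
    rw [integral_div, integral_finsetSum _ fun i _ ↦ (hX i).integrable one_le_two]
    simp [hmean, hn]
  have hsummable : Summable fun k : ℕ ↦ Var[avg (k ^ 2); μ] := by
    refine Summable.of_nonneg_of_le (fun _ ↦ variance_nonneg _ _)
      (fun k ↦ variance_average_le_of_pairwise_covariance_eq_zero hX hvar hcov (k ^ 2)) ?_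
    simpa [div_eq_mul_inv] using (Real.summable_nat_pow_inv.2 one_lt_two).mul_left V
  filter_upwards [ae_tendsto_sub_integral_of_summable_variance (fun k ↦ havg (k ^ 2)) hsummable,
    ae_all_iff.2 hnonneg] with ω hsq hω_nonneg
  refine tendsto_div_of_monotone_of_tendsto_sq
    (fun m n hmn ↦ sum_le_sum_of_subset_of_nonneg (range_mono hmn) fun i _ _ ↦ hω_nonneg i) ?_
  refine (by simpa using hsq.add_const c : Tendsto _ _ (𝓝 c)).congr' ?_
  filter_upwards [eventually_ne_atTop 0] with k hk
  rw [havg_mean _ (pow_ne_zero 2 hk), sub_add_cancel]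

theorem integral_eq_of_condExp_eq_const [IsProbabilityMeasure μ] {E : Type*}
    [NormedAddCommGroup E] [NormedSpace ℝ E] [CompleteSpace E] {m : MeasurableSpace Ω}
    (hm : m ≤ m0) {Y : Ω → E} {c : E} (hc : μ[Y | m] =ᵐ[μ] fun _ ↦ c) : ∫ ω, Y ω ∂μ = c := by
  rw [← integral_condExp hm, integral_congr_ae hc]
  simp

theorem covariance_eq_zero_of_condExp_eq_const [IsProbabilityMeasure μ] {m : MeasurableSpace Ω}
    (hm : m ≤ m0) {X Y : Ω → ℝ} {c : ℝ} (hXm : StronglyMeasurable[m] X) (hX : MemLp X 2 μ)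
    (hY : MemLp Y 2 μ) (hc : μ[Y | m] =ᵐ[μ] fun _ ↦ c) : cov[X, Y; μ] = 0 := by
  have hmul : ∫ ω, (X * Y) ω ∂μ = (∫ ω, X ω ∂μ) * c := by
    rw [← integral_condExp hm, ← integral_mul_const]
    refine integral_congr_ae ?_
    filter_upwards [condExp_mul_of_stronglyMeasurable_left hXm (hX.integrable_mul hY)
      (hY.integrable one_le_two), hc] with ω hω hcω
    rw [hω, Pi.mul_apply, hcω]
  rw [covariance_eq_sub hX hY, hmul, integral_eq_of_condExp_eq_const hm hc, sub_self]

theorem ae_tendsto_average_of_condExp_eq_const [IsProbabilityMeasure μ] {ℱ : Filtration ℕ m0}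
    {X : ℕ → Ω → ℝ} {c V : ℝ} (hℱ : ∀ i, StronglyMeasurable[ℱ (i + 1)] (X i))
    (hnonneg : ∀ i, 0 ≤ᵐ[μ] X i) (hX : ∀ i, MemLp (X i) 2 μ)
    (hcond : ∀ i, μ[X i | ℱ i] =ᵐ[μ] fun _ ↦ c) (hvar : ∀ i, Var[X i; μ] ≤ V) :
    ∀ᵐ ω ∂μ, Tendsto (fun n : ℕ ↦ (∑ i ∈ range n, X i ω) / n) atTop (𝓝 c) := by
  have hcov : ∀ i j, i < j → cov[X i, X j; μ] = 0 := fun i j hij ↦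
    covariance_eq_zero_of_condExp_eq_const (ℱ.le j)
      ((hℱ i).mono (ℱ.mono hij)) (hX i) (hX j) (hcond j)
  refine ae_tendsto_average_of_pairwise_covariance_eq_zero hnonneg hX
    (fun i ↦ integral_eq_of_condExp_eq_const (ℱ.le i) (hcond i)) hvar fun i j hij ↦ ?_
  rcases hij.lt_or_gt with h | h
  · exact hcov i j h
  · rw [covariance_comm, hcov j i h]

theorem condExp_pi_apply {ι : Type*} [Fintype ι] {m : MeasurableSpace Ω} {f : Ω → ι → ℝ}
    (hf : Integrable f μ) (i : ι) :
    μ[fun ω ↦ f ω i | m] =ᵐ[μ] fun ω ↦ (μ[f | m]) ω i :=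
  ((ContinuousLinearMap.proj (R := ℝ) (φ := fun _ : ι ↦ ℝ) i).comp_condExp_comm hf).symm

/-- The filtration generated by the observations `s 1, s 2, …`; its term of index `0` is trivial,
since `s 0` does not occur in the model. -/
def pastFiltration {β : Type*} [MeasurableSpace β] (s : ℕ → Ω → β)
    (hs : ∀ n, Measurable (s n)) : Filtration ℕ m0 where
  seq n := ⨆ i ∈ Icc 1 n, MeasurableSpace.comap (s i) inferInstance
  mono' _ _ hnk := biSup_mono fun _ hi ↦ Icc_subset_Icc_right hnk hi
  le' _ := iSup₂_le fun i _ ↦ (hs i).comap_le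

theorem measurable_pastFiltration {β : Type*} [MeasurableSpace β] {s : ℕ → Ω → β}
    (hs : ∀ n, Measurable (s n)) {n : ℕ} (hn : 1 ≤ n) :
    Measurable[pastFiltration s hs n] (s n) :=
  measurable_iff_comap_le.2 <|
    le_iSup₂_of_le (f := fun i (_ : i ∈ Icc 1 n) ↦ MeasurableSpace.comap (s i) inferInstance)
      n (mem_Icc.2 ⟨hn, le_rfl⟩) le_rfl

theorem sum_Icc_one_eq_sum_range {G : Type*} [AddCommMonoid G] (f : ℕ → G) (n : ℕ) :
    ∑ t ∈ Icc 1 n, f t = ∑ t ∈ range n, f (t + 1) := by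
  rw [range_eq_Ico, sum_Ico_add', zero_add]; rfl

theorem ae_tendsto_average_of_condExp_past_eq_const {ι : Type*} [Fintype ι]
    [IsProbabilityMeasure μ] {s : ℕ → Ω → ι → ℝ} {c : ι → ℝ} {S : ℝ}
    (hs : ∀ n, Measurable (s n))
    (hcond : ∀ n, 1 ≤ n → μ[s n | pastFiltration s hs (n - 1)] =ᵐ[μ] fun _ ↦ c)
    (hbound : ∀ n, 1 ≤ n → ∀ᵐ ω ∂μ, ∀ i, 0 ≤ s n ω i ∧ s n ω i ≤ S) :
    ∀ᵐ ω ∂μ, ∀ i, Tendsto (fun n : ℕ ↦ (∑ t ∈ Icc 1 n, s t ω i) / n) atTop (𝓝 (c i)) := by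
  refine ae_all_iff.2 fun i ↦ ?_
  have hmeas : ∀ n, Measurable fun ω ↦ s n ω i := fun n ↦ (measurable_pi_apply i).comp (hs n)
  have hmem : ∀ n, ∀ᵐ ω ∂μ, s (n + 1) ω i ∈ Set.Icc 0 S := fun n ↦
    (hbound (n + 1) n.succ_pos).mono fun ω hω ↦ hω i
  have hint : ∀ n, Integrable (s (n + 1)) μ := fun n ↦ Integrable.of_eval fun j ↦
    (memLp_of_bounded ((hbound (n + 1) n.succ_pos).mono fun ω hω ↦ hω j)
      ((measurable_pi_apply j).comp (hs (n + 1))).aestronglyMeasurable 1).integrable le_rfl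
  simp only [sum_Icc_one_eq_sum_range]
  refine ae_tendsto_average_of_condExp_eq_const (ℱ := pastFiltration s hs)
    (fun n ↦ ?_) (fun n ↦ (hmem n).mono fun ω hω ↦ hω.1)
    (fun n ↦ memLp_of_bounded (hmem n) (hmeas _).aestronglyMeasurable 2) (fun n ↦ ?_)
    (fun n ↦ variance_le_sq_of_bounded (hmem n) (hmeas _).aemeasurable)
  · exact ((measurable_pi_apply i).comp
      (measurable_pastFiltration hs n.succ_pos)).stronglyMeasurable
  · filter_upwards [condExp_pi_apply (hint n) i, hcond (n + 1) n.succ_pos] with ω hω hcω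
    rw [hω, ← hcω]; rfl

end Variance

end StrongLaw

section Deterministic

open Asymptotics
open scoped Topology

theorem exists_forall_abs_sub_mul_le {ι : Type*} [Finite ι] {u : ℕ → ι → ℝ} {l : ι → ℝ}
    (h : ∀ i, Tendsto (fun n : ℕ ↦ u n i / n) atTop (𝓝 (l i))) {ε : ℝ} (hε : 0 < ε) :
    ∃ K, ∀ n i, |u n i - n * l i| ≤ ε * n + K := by
  have hscalar : ∀ i, ∃ K, ∀ n : ℕ, |u n i - n * l i| - ε * n ≤ K := fun i ↦ by
    have hbdd : IsBoundedUnder (· ≤ ·) atTop fun n : ℕ ↦ |u n i - n * l i| - ε * n := by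
      refine ⟨0, eventually_map.2 ?_⟩
      filter_upwards [(h i).eventually (Metric.closedBall_mem_nhds _ hε), eventually_gt_atTop 0]
        with n hn hn_pos
      have hn_pos' : (0 : ℝ) < n := Nat.cast_pos.2 hn_pos
      rw [Real.dist_eq, div_sub' hn_pos'.ne', abs_div, abs_of_pos hn_pos',
        div_le_iff₀ hn_pos'] at hn
      exact sub_nonpos.2 hn
    obtain ⟨K, hK⟩ := hbdd.bddAbove_range
    exact ⟨K, fun n ↦ hK ⟨n, rfl⟩⟩
  choose K hK using hscalar
  obtain ⟨Kmax, hKmax⟩ := Finite.exists_le K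
  exact ⟨Kmax, fun n i ↦ by linarith [hK i n, hKmax i]⟩

theorem tendsto_div_of_forall_abs_sub_le {α : Type*} {l : Filter α} {x L : α → ℝ} {c : ℝ}
    (hc : 0 < c) (hx : Tendsto x l atTop) (hL : ∀ a, 0 ≤ L a)
    (h : ∀ ε, 0 < ε → ∃ K, ∀ᶠ a in l, |L a * c - x a| ≤ ε * L a + K) :
    Tendsto (fun a ↦ L a / (x a / c)) l (𝓝 1) := by
  have hL_top : Tendsto L l atTop := by
    obtain ⟨K, hK⟩ := h 1 one_pos
    refine tendsto_atTop_mono' l ?_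
      ((tendsto_atTop_add_const_right l (-K) hx).atTop_div_const (by positivity : 0 < c + 1))
    filter_upwards [hK] with a ha
    rw [div_le_iff₀ (by positivity)]
    linarith [neg_abs_le (L a * c - x a)]
  have hequiv : (fun a ↦ x a / c) ~[l] L := by
    refine IsLittleO.isEquivalent (IsLittleO.of_bound fun ε hε ↦ ?_)
    obtain ⟨K, hK⟩ := h (c * ε / 2) (by positivity)
    filter_upwards [hK, hL_top.eventually_ge_atTop (2 * K / (c * ε))] with a ha hKa
    rw [div_le_iff₀ (by positivity)] at hKa
    rw [Pi.sub_apply, Real.norm_of_nonneg (hL a), Real.norm_eq_abs, div_sub' hc.ne', abs_div,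
      abs_of_pos hc, div_le_iff₀ hc, abs_sub_comm, mul_comm c]
    linarith
  refine (isEquivalent_iff_tendsto_one ?_).1 hequiv.symm
  filter_upwards [hx.eventually_gt_atTop 0] with a ha
  positivity

section Greedy

variable {ι : Type*} [Fintype ι]

theorem abs_le_card_of_sum_eq_zero {x : ι → ℝ} (hx : ∀ i, x i ≤ 1) (hsum : ∑ i, x i = 0)
    (i : ι) : |x i| ≤ Fintype.card ι := by
  have hcard : (1 : ℝ) ≤ Fintype.card ι := mod_cast Fintype.card_pos_iff.2 ⟨i⟩
  have hdefect : 1 - x i ≤ ∑ j, (1 - x j) :=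
    single_le_sum (f := fun j ↦ 1 - x j) (fun j _ ↦ sub_nonneg.2 (hx j)) (mem_univ i)
  rw [sum_sub_distrib, hsum, sum_const, card_univ, nsmul_one, sub_zero] at hdefect
  exact abs_le.2 ⟨by linarith, (hx i).trans hcard⟩

theorem sub_add_single_le_one_of_forall_sub_le [DecidableEq ι] {p D : ι → ℝ}
    (hp : p ∈ stdSimplex ℝ ι) (hsum : ∑ i, D i = 0) (hD : ∀ i, D i ≤ 1) {i : ι}
    (hi : ∀ j, (D - p) i ≤ (D - p) j) (j : ι) : (D - p + Pi.single i 1 : ι → ℝ) j ≤ 1 := by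
  have hsub : ∑ j, (D - p) j = -1 := by simp [sum_sub_distrib, hsum, hp.2]
  rcases eq_or_ne j i with rfl | hji
  · have hmin : (D - p) j ≤ 0 := by
      by_contra! hpos
      linarith [sum_nonneg fun k (_ : k ∈ univ) ↦ hpos.le.trans (hi k)]
    simpa using hmin
  · simpa [hji] using (hD j).trans (le_add_of_nonneg_right (hp.1 j))

/- Greedy rule: `D` is the excess of past choices over `n • p`, and each step picks the index that
lags behind most. -/
theorem exists_seq_abs_sum_single_sub_le [DecidableEq ι] {p : ι → ℝ} (hp : p ∈ stdSimplex ℝ ι) :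
    ∃ a : ℕ → ι, ∀ n i,
      |(∑ t ∈ range n, Pi.single (a t) 1 : ι → ℝ) i - n * p i| ≤ Fintype.card ι := by
  have : Nonempty ι := univ_nonempty_iff.1 <| nonempty_of_sum_ne_zero (hp.2.trans_ne one_ne_zero)
  choose lag hlag using fun x : ι → ℝ ↦ Finite.exists_min x
  let D : ℕ → ι → ℝ := fun n ↦ Nat.rec 0 (fun _ D ↦ D - p + Pi.single (lag (D - p)) 1) n
  have hD_succ (n : ℕ) : D (n + 1) = D n - p + Pi.single (lag (D n - p)) 1 := rfl
  have hD (n : ℕ) : ∑ i, D n i = 0 ∧ ∀ i, D n i ≤ 1 := by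
    induction n with
    | zero => simp [D]
    | succ n ih =>
      rw [hD_succ]
      exact ⟨by simp [sum_add_distrib, ih.1, hp.2],
        sub_add_single_le_one_of_forall_sub_le hp ih.1 ih.2 (hlag _)⟩
  have hsum (n : ℕ) : ∑ t ∈ range n, Pi.single (lag (D t - p)) 1 = D n + (n : ℝ) • p := by
    induction n with
    | zero => simp [D]
    | succ n ih => rw [sum_range_succ, ih, hD_succ]; push_cast; module
  refine ⟨fun t ↦ lag (D t - p), fun n i ↦ ?_⟩
  rw [hsum]
  simpa using abs_le_card_of_sum_eq_zero (hD n).2 (hD n).1 i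

theorem exists_seq_tendsto_sum_single_div [DecidableEq ι] {p : ι → ℝ}
    (hp : p ∈ stdSimplex ℝ ι) :
    ∃ a : ℕ → ι, Tendsto (fun n : ℕ ↦ (n : ℝ)⁻¹ • ∑ t ∈ range n, Pi.single (a t) (1 : ℝ)) atTop
      (𝓝 p) := by
  obtain ⟨a, ha⟩ := exists_seq_abs_sum_single_sub_le hp
  refine ⟨a, tendsto_pi_nhds.2 fun i ↦ ?_⟩
  rw [tendsto_iff_dist_tendsto_zero]
  refine squeeze_zero' (.of_forall fun _ ↦ dist_nonneg) ?_
    (tendsto_const_div_atTop_nhds_zero_nat (Fintype.card ι : ℝ))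
  filter_upwards [eventually_gt_atTop 0] with n hn
  have hn' : (0 : ℝ) < n := Nat.cast_pos.2 hn
  rw [Real.dist_eq, Pi.smul_apply, smul_eq_mul, inv_mul_eq_div, div_sub' hn'.ne', abs_div,
    abs_of_pos hn']
  gcongr
  exact ha n i

end Greedy

section LinearProgram

variable {ι : Type*} [Fintype ι]

/-- The values `f` for which the auxiliary linear program with matrix `R` has a feasible point
`(v, f)`; the optimal value of the program is the least element of this set. -/
def lpValues (R : Matrix ι ι ℝ) : Set ℝ :=
  {f | ∃ v ∈ stdSimplex ℝ ι, ∀ i, (R *ᵥ v) i ≤ f}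

theorem exists_mul_sum_le_mulVec [Nonempty ι] {R : Matrix ι ι ℝ} {f : ℝ}
    (hf : f ∈ lowerBounds (lpValues R)) {V : ι → ℝ} (hV : 0 ≤ V) :
    ∃ i, f * ∑ j, V j ≤ (R *ᵥ V) i := by
  rcases (sum_nonneg fun j _ ↦ hV j).eq_or_lt with hsum | hsum
  · have hV_zero : V = 0 := funext fun j ↦
      (sum_eq_zero_iff_of_nonneg fun j _ ↦ hV j).1 hsum.symm j (mem_univ j)
    exact ‹Nonempty ι›.elim fun i ↦ ⟨i, by simp [hV_zero]⟩
  set w : ι → ℝ := (∑ j, V j)⁻¹ • V with hw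
  have hw_mem : w ∈ stdSimplex ℝ ι :=
    ⟨fun j ↦ mul_nonneg (inv_nonneg.2 hsum.le) (hV j), by
      simp [hw, ← mul_sum, inv_mul_cancel₀ hsum.ne']⟩
  obtain ⟨i, hi⟩ := Finite.exists_max (R *ᵥ w)
  have hfi : f ≤ (R *ᵥ w) i := hf ⟨w, hw_mem, hi⟩
  rw [hw, mulVec_smul, Pi.smul_apply, smul_eq_mul, le_inv_mul_iff₀ hsum, mul_comm] at hfi
  exact ⟨i, hfi⟩

end LinearProgram

section Lifetime

variable {M : ℕ} {τ : ℝ} {C : Matrix (Fin M) (Fin M) ℝ}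

theorem isDecision_single (i : Fin M) : IsDecision (Pi.single i (1 : ℝ)) :=
  ⟨fun j ↦ by rcases eq_or_ne j i with rfl | h <;> simp [*], by simp⟩

theorem IsDecision.nonneg {v : Fin M → ℝ} (hv : IsDecision v) : 0 ≤ v := fun m ↦ by
  rcases hv.1 m with h | h <;> simp [h]

theorem sum_sum_isDecision {v : ℕ → Fin M → ℝ} (hv : ∀ t, IsDecision (v t)) (n : ℕ) :
    ∑ m, (∑ t ∈ Icc 1 n, v t) m = n := by
  simp only [Finset.sum_apply]
  rw [sum_comm]
  simp [fun t ↦ (hv t).2]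

/-- The matrix `R = C − s̄·uᵀ` of the auxiliary linear program. -/
def netConsumption (C : Matrix (Fin M) (Fin M) ℝ) (sbar : Fin M → ℝ) :
    Matrix (Fin M) (Fin M) ℝ :=
  C - Matrix.of fun i _ ↦ sbar i

theorem netConsumption_mulVec_apply (sbar v : Fin M → ℝ) (m : Fin M) :
    (netConsumption C sbar *ᵥ v) m = (C *ᵥ v) m - sbar m * ∑ j, v j := by
  simp [netConsumption, Matrix.mulVec, dotProduct, mul_sum, sub_mul, sum_sub_distrib]

theorem energyVec_eq_netConsumption {s v : ℕ → Fin M → ℝ} (hv : ∀ t, IsDecision (v t))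
    (sbar : Fin M → ℝ) (e0 : ℝ) (n : ℕ) (m : Fin M) :
    energyVec τ C e0 s v n m = e0 + τ * ((∑ t ∈ Icc 1 n, s t m) - n * sbar m)
      - τ * (netConsumption C sbar *ᵥ ∑ t ∈ Icc 1 n, v t) m := by
  rw [netConsumption_mulVec_apply, sum_sum_isDecision hv, energyVec]
  ring

/-- The decisions `v` keep all base stations alive during the slots `1, …, N`. -/
def SurvivesUntil (τ : ℝ) (C : Matrix (Fin M) (Fin M) ℝ) (e0 : ℝ) (s v : ℕ → Fin M → ℝ)
    (N : ℕ) : Prop :=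
  ∀ n, 1 ≤ n → n ≤ N → ∀ m, 0 ≤ energyVec τ C e0 s v n m

variable {e0 : ℝ} {s v : ℕ → Fin M → ℝ} {N : ℕ}

theorem SurvivesUntil.mono {N' : ℕ} (h : SurvivesUntil τ C e0 s v N') (hN : N ≤ N') :
    SurvivesUntil τ C e0 s v N :=
  fun n hn hnN ↦ h n hn (hnN.trans hN)

theorem SurvivesUntil.energyVec_nonneg (h : SurvivesUntil τ C e0 s v N) (he0 : 0 ≤ e0) :
    ∀ m, 0 ≤ energyVec τ C e0 s v N m := by
  rcases N.eq_zero_or_pos with rfl | hN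
  · simpa [energyVec] using fun _ ↦ he0
  · exact h N hN le_rfl

theorem SurvivesUntil.le_Nopt (hv : ∀ t, IsDecision (v t)) (h : SurvivesUntil τ C e0 s v N) :
    (N : ℕ∞) ≤ Nopt τ C e0 s :=
  le_sSup ⟨N, rfl, v, hv, h⟩

theorem exists_survivesUntil_of_le_Nopt [NeZero M] (h : (N : ℕ∞) ≤ Nopt τ C e0 s) :
    ∃ v : ℕ → Fin M → ℝ, (∀ t, IsDecision (v t)) ∧ SurvivesUntil τ C e0 s v N := by
  cases N with
  | zero => exact ⟨fun _ ↦ Pi.single 0 1, fun _ ↦ isDecision_single 0,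
      fun n hn hn0 ↦ absurd hn0 (by lia)⟩
  | succ k =>
    have hk : (k : ℕ∞) < Nopt τ C e0 s := lt_of_lt_of_le (by exact_mod_cast k.lt_succ_self) h
    obtain ⟨_, ⟨N', rfl, v, hv, hsurv⟩, hkN'⟩ := lt_sSup_iff.1 hk
    exact ⟨v, hv, SurvivesUntil.mono hsurv (by exact_mod_cast hkN')⟩

variable {sbar : Fin M → ℝ} {fstar ε : ℝ}

theorem exists_le_of_le_Nopt [NeZero M] (hτ : 0 < τ)
    (hf : fstar ∈ lowerBounds (lpValues (netConsumption C sbar)))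
    (hs : ∀ m, Tendsto (fun n : ℕ ↦ (∑ t ∈ Icc 1 n, s t m) / n) atTop (𝓝 (sbar m)))
    (hε : 0 < ε) :
    ∃ K, ∀ e0, 0 ≤ e0 → ∀ N : ℕ, N ≤ Nopt τ C e0 s → N * fstar ≤ e0 / τ + (ε * N + K) := by
  obtain ⟨K, hK⟩ := exists_forall_abs_sub_mul_le hs hε
  refine ⟨K, fun e0 he0 N hN ↦ ?_⟩
  obtain ⟨v, hv, hsurv⟩ := exists_survivesUntil_of_le_Nopt hN
  obtain ⟨m, hm⟩ := exists_mul_sum_le_mulVec hf (V := ∑ t ∈ Icc 1 N, v t)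
    (sum_nonneg fun t _ ↦ (hv t).nonneg)
  rw [sum_sum_isDecision hv] at hm
  have henergy := hsurv.energyVec_nonneg he0 m
  rw [energyVec_eq_netConsumption hv sbar] at henergy
  have hdrift : (netConsumption C sbar *ᵥ ∑ t ∈ Icc 1 N, v t) m
      ≤ e0 / τ + ((∑ t ∈ Icc 1 N, s t m) - N * sbar m) := by
    rw [div_add' _ _ _ hτ.ne', le_div_iff₀ hτ]
    linarith
  linarith [le_of_abs_le (hK N m)]

theorem exists_le_Nopt_of_le (hτ : 0 < τ) (hfstar : 0 ≤ fstar)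
    (hf : fstar ∈ lpValues (netConsumption C sbar))
    (hs : ∀ m, Tendsto (fun n : ℕ ↦ (∑ t ∈ Icc 1 n, s t m) / n) atTop (𝓝 (sbar m)))
    (hε : 0 < ε) :
    ∃ K, ∀ (e0 : ℝ) (N : ℕ), N * fstar + (ε * N + K) ≤ e0 / τ → N ≤ Nopt τ C e0 s := by
  obtain ⟨p, hp, hpf⟩ := hf
  obtain ⟨a, ha⟩ := exists_seq_tendsto_sum_single_div hp
  let v : ℕ → Fin M → ℝ := fun t ↦ Pi.single (a (t - 1)) 1
  have hv (t : ℕ) : IsDecision (v t) := isDecision_single _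
  let drift : ℕ → Fin M → ℝ := fun n m ↦
    (∑ t ∈ Icc 1 n, s t m) - (C *ᵥ ∑ t ∈ Icc 1 n, v t) m
  have hdrift (m : Fin M) :
      Tendsto (fun n : ℕ ↦ drift n m / n) atTop (𝓝 (-(netConsumption C sbar *ᵥ p) m)) := by
    have hCv : Tendsto (fun n : ℕ ↦ (C *ᵥ ((n : ℝ)⁻¹ • ∑ t ∈ Icc 1 n, v t)) m) atTop
        (𝓝 ((C *ᵥ p) m)) := by
      have hcont : Continuous fun x ↦ (C *ᵥ x) m := by fun_prop
      simpa only [sum_Icc_one_eq_sum_range, v, Nat.add_sub_cancel, Function.comp_def] using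
        (hcont.tendsto p).comp ha
    rw [netConsumption_mulVec_apply, hp.2, mul_one, neg_sub]
    refine ((hs m).sub hCv).congr fun n ↦ ?_
    rw [mulVec_smul, Pi.smul_apply, smul_eq_mul, inv_mul_eq_div, ← sub_div]
  obtain ⟨K, hK⟩ := exists_forall_abs_sub_mul_le hdrift hε
  refine ⟨K, fun e0 N hN ↦ SurvivesUntil.le_Nopt hv fun n _ hnN m ↦ ?_⟩
  have hnN' : (n : ℝ) * (fstar + ε) ≤ N * (fstar + ε) := by gcongr
  have hnf : (n : ℝ) * (netConsumption C sbar *ᵥ p) m ≤ n * fstar := by gcongr; exact hpf m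
  have hnonneg : 0 ≤ e0 / τ + drift n m := by linarith [neg_le_of_abs_le (hK n m)]
  calc 0 ≤ τ * (e0 / τ + drift n m) := by positivity
    _ = energyVec τ C e0 s v n m := by
      rw [energyVec, mul_add, mul_div_cancel₀ _ hτ.ne']; ring

theorem Nopt_ne_top [NeZero M] (hτ : 0 < τ) (hfstar : 0 < fstar)
    (hf : fstar ∈ lowerBounds (lpValues (netConsumption C sbar)))
    (hs : ∀ m, Tendsto (fun n : ℕ ↦ (∑ t ∈ Icc 1 n, s t m) / n) atTop (𝓝 (sbar m)))
    (he0 : 0 ≤ e0) : Nopt τ C e0 s ≠ ⊤ := by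
  obtain ⟨K, hK⟩ := exists_le_of_le_Nopt hτ hf hs (half_pos hfstar)
  obtain ⟨N, hN⟩ := exists_nat_gt ((e0 / τ + K) / (fstar / 2))
  rw [div_lt_iff₀ (half_pos hfstar)] at hN
  intro htop
  linarith [hK e0 he0 N (htop ▸ le_top)]

theorem exists_abs_Nopt_toNat_mul_sub_le [NeZero M] (hτ : 0 < τ) (hfstar : 0 < fstar)
    (hf : IsLeast (lpValues (netConsumption C sbar)) fstar)
    (hs : ∀ m, Tendsto (fun n : ℕ ↦ (∑ t ∈ Icc 1 n, s t m) / n) atTop (𝓝 (sbar m)))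
    (hε : 0 < ε) :
    ∃ K, ∀ e0, 0 ≤ e0 → |(Nopt τ C e0 s).toNat * fstar - e0 / τ|
      ≤ ε * (Nopt τ C e0 s).toNat + K := by
  obtain ⟨K₁, hK₁⟩ := exists_le_of_le_Nopt hτ hf.2 hs hε
  obtain ⟨K₂, hK₂⟩ := exists_le_Nopt_of_le hτ hfstar.le hf.1 hs hε
  refine ⟨max K₁ (fstar + ε + K₂), fun e0 he0 ↦ ?_⟩
  obtain ⟨L, hL⟩ := ENat.ne_top_iff_exists.1 (Nopt_ne_top hτ hfstar hf.2 hs he0)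
  rw [← hL, ENat.toNat_natCast]
  have hupper : L * fstar ≤ e0 / τ + (ε * L + K₁) := hK₁ e0 he0 L hL.le
  have hlower : e0 / τ < (L + 1) * fstar + (ε * (L + 1) + K₂) := by
    by_contra! h
    have hsucc : ((L + 1 : ℕ) : ℕ∞) ≤ Nopt τ C e0 s := hK₂ e0 (L + 1) (by exact_mod_cast h)
    rw [← hL, Nat.cast_le] at hsucc
    exact L.not_succ_le_self hsucc
  rw [abs_le]
  constructor <;> linarith [le_max_left K₁ (fstar + ε + K₂), le_max_right K₁ (fstar + ε + K₂)]

theorem tendsto_Nopt_toNat_div [NeZero M] (hτ : 0 < τ) (hfstar : 0 < fstar)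
    (hf : IsLeast (lpValues (netConsumption C sbar)) fstar)
    (hs : ∀ m, Tendsto (fun n : ℕ ↦ (∑ t ∈ Icc 1 n, s t m) / n) atTop (𝓝 (sbar m))) :
    Tendsto (fun e0 : ℝ ↦ ((Nopt τ C e0 s).toNat : ℝ) / (e0 / (τ * fstar))) atTop (𝓝 1) := by
  simp only [← div_div]
  refine tendsto_div_of_forall_abs_sub_le hfstar (tendsto_id.atTop_div_const hτ)
    (fun _ ↦ Nat.cast_nonneg _) fun ε hε ↦ ?_
  obtain ⟨K, hK⟩ := exists_abs_Nopt_toNat_mul_sub_le hτ hfstar hf hs hε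
  exact ⟨K, (eventually_ge_atTop 0).mono hK⟩

end Lifetime

end Deterministic

theorem optimal_lifetime_ratio_of_fstar_pos_general {M : ℕ} {τ : ℝ} (hτ : 0 < τ)
    {C : Matrix (Fin M) (Fin M) ℝ} {sbar : Fin M → ℝ} {fstar : ℝ} (hfstar : 0 < fstar)
    (hf : IsLeast (lpValues (netConsumption C sbar)) fstar)
    {Ω : Type*} {m0 : MeasurableSpace Ω} {μ : Measure Ω} [IsProbabilityMeasure μ]
    {s : ℕ → Ω → Fin M → ℝ}
    (hs : ∀ᵐ ω ∂μ, ∀ m,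
      Tendsto (fun n : ℕ ↦ (∑ t ∈ Icc 1 n, s t ω m) / n) atTop (nhds (sbar m)))
    {δ : ℝ} (hδ : 0 < δ) :
    Tendsto (fun e0 : ℝ ↦ μ {ω | Nopt τ C e0 (fun t ↦ s t ω) ≠ ⊤ ∧
        |((Nopt τ C e0 (fun t ↦ s t ω)).toNat : ℝ) / (e0 / (τ * fstar)) - 1| < δ})
      atTop (nhds 1) := by
  have : NeZero M := ⟨by rintro rfl; obtain ⟨p, hp, -⟩ := hf.1; simpa using hp.2⟩
  rw [← measure_univ (μ := μ)]
  refine tendsto_measure_of_ae_eventually_mem ?_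
  filter_upwards [hs] with ω hω
  filter_upwards [eventually_ge_atTop 0,
    (tendsto_Nopt_toNat_div hτ hfstar hf hω).eventually (Metric.ball_mem_nhds 1 hδ)]
    with e0 he0 hratio
  exact ⟨Nopt_ne_top hτ hfstar hf.2 hω he0, by rwa [Real.dist_eq] at hratio⟩

/-- If the optimal LP value `f* > 0` and (D1), (D2) hold, then for every `δ > 0`,
`P(N_opt < ∞ and |N_opt/(e0/(τ f*)) − 1| < δ) → 1` as `e0 → ∞`. -/
theorem optimal_lifetime_ratio_of_fstar_pos
    {M : ℕ} (hM : 2 ≤ M)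
    (τ : ℝ) (hτ : 0 < τ)
    (C : Matrix (Fin M) (Fin M) ℝ) (hC : ∀ i j, 0 ≤ C i j)
    (sbar : Fin M → ℝ) (S : ℝ) (hS : 0 < S)
    (hsbarS : ∀ m, 0 ≤ sbar m ∧ sbar m ≤ S)
    (fstar : ℝ) (hfstar : 0 < fstar)
    -- `f*` is attained by a feasible point of the auxiliary LP (with `R = C − s̄·uᵀ`)
    (hattain : ∃ vbar : Fin M → ℝ, (∀ m, 0 ≤ vbar m) ∧ (∑ m, vbar m) = 1 ∧
      ∀ m, (C - Matrix.of fun i _ => sbar i).mulVec vbar m ≤ fstar)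
    -- and is optimal for it
    (hopt : ∀ (vbar : Fin M → ℝ) (f : ℝ), (∀ m, 0 ≤ vbar m) → (∑ m, vbar m) = 1 →
      (∀ m, (C - Matrix.of fun i _ => sbar i).mulVec vbar m ≤ f) → fstar ≤ f)
    {Ω : Type*} {m0 : MeasurableSpace Ω} (μ : Measure Ω) [IsProbabilityMeasure μ]
    (s : ℕ → Ω → Fin M → ℝ) (hmeas : ∀ n, Measurable (s n))
    -- (D1): constant conditional expectation given the past
    (hD1 : ∀ n, 1 ≤ n →
      (μ[s n | ⨆ i ∈ Finset.Icc 1 (n-1), MeasurableSpace.comap (s i) inferInstance]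
        =ᵐ[μ] (fun _ => sbar)))
    -- (D2): boundedness
    (hD2 : ∀ n, 1 ≤ n → ∀ᵐ ω ∂μ, ∀ m, 0 ≤ s n ω m ∧ s n ω m ≤ S)
    (δ : ℝ) (hδ : 0 < δ) :
    Tendsto (fun e0 : ℝ => μ {ω | Nopt τ C e0 (fun t => s t ω) ≠ ⊤ ∧
        |((Nopt τ C e0 (fun t => s t ω)).toNat : ℝ) / (e0 / (τ * fstar)) - 1| < δ})
      atTop (nhds 1) := by
  obtain ⟨vbar, hvbar_nonneg, hvbar_sum, hvbar⟩ := hattain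
  exact optimal_lifetime_ratio_of_fstar_pos_general hτ hfstar
    ⟨⟨vbar, ⟨hvbar_nonneg, hvbar_sum⟩, hvbar⟩, fun f ⟨v, hv, hvf⟩ ↦ hopt v f hv.1 hv.2 hvf⟩
    (ae_tendsto_average_of_condExp_past_eq_const hmeas hD1 hD2) hδ
end

section
/- Suppose assumptions (D1) and (D2) on the recharge rates hold, and in addition (D3) C_{ij} − s̄_i < 0 for all i ≠ j, and (D4) C is invertible with (Cᵀ)⁻¹·u > 0 componentwise. If the optimal value f* of the auxiliary linear program satisfies f* > 0, then for every δ > 0 and every HEF process, lim_{e0 → ∞} P( N_hef is finite and |N_hef / (e0/(τ f*)) − 1| < δ ) = 1. -/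
open MeasureTheory Filter Finset Matrix

/-- The lifetime of a given decision sequence: the smallest `n ≥ 1` such that some
component of `e^(n+1)` is negative, `∞` if no such `n` exists. -/
noncomputable def lifetime {M : ℕ} (τ : ℝ) (C : Matrix (Fin M) (Fin M) ℝ)
    (e0 : ℝ) (s v : ℕ → Fin M → ℝ) : ℕ∞ :=
  sInf {x : ℕ∞ | ∃ n : ℕ, x = (n : ℕ∞) ∧ 1 ≤ n ∧ ∃ m, energyVec τ C e0 s v (n+1) m < 0}

/-!
By a martingale strong law the accumulated recharge noise is `o(n)`. Since the off-diagonal entries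
of `R = C - s̄ uᵀ` are negative and `f* > 0`, the linear program has an optimum `p > 0` at which
every constraint is tight. Let `z` be the excess of the numbers of selections over `n • p`, so that
the energies are `e0 - τ f* n - τ R z + o(n)`. Since the entries of `z` sum to zero, some component
of `R z` is nonpositive, so the station of highest energy has `(R z) i ≤ o(n)`; selecting it
preserves a bound `z ≤ o(n) p`, whence `z = o(n)`. Thus every energy is `e0 - τ f* n + o(n)` and
first becomes negative at `n ~ e0 / (τ f*)`.
-/

open Asymptotics Topology

section KroneckerLemma

variable {E : Type*} [NormedAddCommGroup E] [NormedSpace ℝ E]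

lemma sum_range_smul_sub_by_parts (a : ℕ → ℝ) (y : ℕ → E) (n : ℕ) :
    ∑ i ∈ range n, a i • (y (i + 1) - y i) =
      a n • y n - a 0 • y 0 - ∑ i ∈ range n, (a (i + 1) - a i) • y (i + 1) := by
  induction n with
  | zero => simp
  | succ n ih =>
    rw [sum_range_succ, sum_range_succ, ih]
    module

/-- **Kronecker's lemma.** -/
theorem isLittleO_sum_of_tendsto_sum_inv_smul {a : ℕ → ℝ} (ha_mono : Monotone a)
    (ha_ne : ∀ n, a n ≠ 0) (ha_top : Tendsto a atTop atTop) {x : ℕ → E} {c : E}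
    (h : Tendsto (fun n => ∑ i ∈ range n, (a i)⁻¹ • x i) atTop (𝓝 c)) :
    (fun n => ∑ i ∈ range n, x i) =o[atTop] a := by
  set y : ℕ → E := fun n => (∑ i ∈ range n, (a i)⁻¹ • x i) - c
  have hy : Tendsto y atTop (𝓝 0) := by simpa only [sub_self] using h.sub_const c
  have hy_one : y =o[atTop] fun _ => (1 : ℝ) := (isLittleO_one_iff ℝ).2 hy
  have hconst (b : E) : (fun _ : ℕ => b) =o[atTop] a :=
    isLittleO_const_left.2 (.inr (tendsto_norm_atTop_atTop.comp ha_top))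
  have hboundary : (fun n => a n • y n) =o[atTop] a := by
    simpa only [smul_eq_mul, mul_one] using (isBigO_refl a atTop).smul_isLittleO hy_one
  have hincr_sum : (fun n => ∑ i ∈ range n, (a (i + 1) - a i)) = fun n => a n - a 0 :=
    funext (sum_range_sub a)
  have hincr : (fun i => (a (i + 1) - a i) • y (i + 1)) =o[atTop] fun i => a (i + 1) - a i := by
    simpa only [smul_eq_mul, mul_one, Function.comp_apply, Function.comp_def] using
      (isBigO_refl (fun i => a (i + 1) - a i) atTop).smul_isLittleO
        (hy_one.comp_tendsto (tendsto_add_atTop_nat 1))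
  have hincr_total : (fun n => ∑ i ∈ range n, (a (i + 1) - a i) • y (i + 1)) =o[atTop] a := by
    refine (hincr.sum_range (fun i => sub_nonneg.2 (ha_mono i.le_succ)) ?_).trans_isBigO ?_ <;>
      rw [hincr_sum]
    · exact tendsto_atTop_add_const_right _ _ ha_top
    · exact (isBigO_refl a atTop).sub (isLittleO_const_left.2
        (.inr (tendsto_norm_atTop_atTop.comp ha_top))).isBigO
  refine ((hboundary.sub (hconst (a 0 • y 0))).sub hincr_total).congr_left fun n => ?_
  rw [← sum_range_smul_sub_by_parts]
  refine sum_congr rfl fun i _ => ?_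
  rw [sub_sub_sub_cancel_right, sum_range_succ_sub_sum fun i => (a i)⁻¹ • x i,
    smul_inv_smul₀ (ha_ne i)]

end KroneckerLemma

section MartingaleDifference

variable {Ω : Type*}

lemma integral_mul_eq_zero_of_condExp_eq_zero {m m0 : MeasurableSpace Ω} {μ : Measure Ω}
    (hm : m ≤ m0) [SigmaFinite (μ.trim hm)] {X Y : Ω → ℝ} (hX : StronglyMeasurable[m] X)
    (hXY : Integrable (X * Y) μ) (hY : Integrable Y μ) (hYm : μ[Y | m] =ᵐ[μ] 0) :
    ∫ ω, X ω * Y ω ∂μ = 0 := by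
  have hcond : μ[X * Y | m] =ᵐ[μ] 0 := by
    filter_upwards [condExp_mul_of_stronglyMeasurable_left hX hXY hY, hYm] with ω hpull hzero
    rw [hpull, Pi.mul_apply, hzero, Pi.zero_apply, mul_zero]
  calc ∫ ω, X ω * Y ω ∂μ = ∫ ω, (μ[X * Y | m]) ω ∂μ := (integral_condExp hm).symm
    _ = 0 := integral_eq_zero_of_ae hcond

variable {m0 : MeasurableSpace Ω}

/-- A square-integrable martingale difference sequence, indexed so that `d n` is the increment
from time `n` to time `n + 1`. -/
structure IsSqIntegrableMartingaleDifference (d : ℕ → Ω → ℝ) (F : Filtration ℕ m0)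
    (μ : Measure Ω) : Prop where
  stronglyMeasurable (n : ℕ) : StronglyMeasurable[F (n + 1)] (d n)
  memLp_two (n : ℕ) : MemLp (d n) 2 μ
  condExp_eq_zero (n : ℕ) : μ[d n | F n] =ᵐ[μ] 0

namespace IsSqIntegrableMartingaleDifference

variable {μ : Measure Ω} {F : Filtration ℕ m0} {d : ℕ → Ω → ℝ}

lemma const_mul (hd : IsSqIntegrableMartingaleDifference d F μ) (a : ℕ → ℝ) :
    IsSqIntegrableMartingaleDifference (fun n ω => a n * d n ω) F μ where
  stronglyMeasurable n := (hd.stronglyMeasurable n).const_mul (a n)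
  memLp_two n := (hd.memLp_two n).const_mul (a n)
  condExp_eq_zero n := by
    filter_upwards [condExp_smul (μ := μ) (a n) (d n) (F n), hd.condExp_eq_zero n]
      with ω hsmul hzero
    exact hsmul.trans (by rw [Pi.smul_apply, hzero, Pi.zero_apply, smul_zero])

lemma memLp_sum (hd : IsSqIntegrableMartingaleDifference d F μ) (n : ℕ) :
    MemLp (fun ω => ∑ i ∈ range n, d i ω) 2 μ :=
  memLp_finsetSum _ fun i _ => hd.memLp_two i

lemma stronglyMeasurable_sum (hd : IsSqIntegrableMartingaleDifference d F μ) (n : ℕ) :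
    StronglyMeasurable[F n] fun ω => ∑ i ∈ range n, d i ω :=
  Finset.stronglyMeasurable_fun_sum _ fun i hi =>
    (hd.stronglyMeasurable i).mono (F.mono (mem_range.1 hi))

variable [IsFiniteMeasure μ]

lemma martingale_sum (hd : IsSqIntegrableMartingaleDifference d F μ) :
    Martingale (fun n ω => ∑ i ∈ range n, d i ω) F μ := by
  refine martingale_of_condExp_sub_eq_zero_nat hd.stronglyMeasurable_sum
    (fun n => (hd.memLp_sum n).integrable one_le_two) fun n => ?_
  have hincr : (fun ω => ∑ i ∈ range (n + 1), d i ω) - (fun ω => ∑ i ∈ range n, d i ω) = d n :=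
    funext fun ω => sum_range_succ_sub_sum (d · ω)
  rw [hincr]
  exact hd.condExp_eq_zero n

lemma integral_sq_sum (hd : IsSqIntegrableMartingaleDifference d F μ) (n : ℕ) :
    ∫ ω, (∑ i ∈ range n, d i ω) ^ 2 ∂μ = ∑ i ∈ range n, ∫ ω, d i ω ^ 2 ∂μ := by
  induction n with
  | zero => simp
  | succ n ih =>
    have hcross : Integrable (fun ω => (∑ i ∈ range n, d i ω) * d n ω) μ :=
      (hd.memLp_sum n).integrable_mul (hd.memLp_two n)
    have horth : ∫ ω, (∑ i ∈ range n, d i ω) * d n ω ∂μ = 0 :=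
      integral_mul_eq_zero_of_condExp_eq_zero (F.le n) (hd.stronglyMeasurable_sum n) hcross
        ((hd.memLp_two n).integrable one_le_two) (hd.condExp_eq_zero n)
    have hsq := (hd.memLp_sum n).integrable_sq
    have hsq_cross : Integrable (fun ω => (∑ i ∈ range n, d i ω) ^ 2
        + 2 * ((∑ i ∈ range n, d i ω) * d n ω)) μ := hsq.add (hcross.const_mul 2)
    calc ∫ ω, (∑ i ∈ range (n + 1), d i ω) ^ 2 ∂μ
        = ∫ ω, ((∑ i ∈ range n, d i ω) ^ 2 + 2 * ((∑ i ∈ range n, d i ω) * d n ω)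
            + d n ω ^ 2) ∂μ := by
          congr with ω
          rw [sum_range_succ]
          ring
      _ = ∫ ω, (∑ i ∈ range n, d i ω) ^ 2 ∂μ
            + 2 * ∫ ω, (∑ i ∈ range n, d i ω) * d n ω ∂μ + ∫ ω, d n ω ^ 2 ∂μ := by
          rw [integral_add hsq_cross (hd.memLp_two n).integrable_sq,
            integral_add hsq (hcross.const_mul 2), integral_const_mul]
      _ = ∑ i ∈ range (n + 1), ∫ ω, d i ω ^ 2 ∂μ := by
          rw [horth, ih, mul_zero, add_zero, sum_range_succ]

lemma eLpNorm_one_sum_le (hd : IsSqIntegrableMartingaleDifference d F μ)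
    (hsum : Summable fun n => ∫ ω, d n ω ^ 2 ∂μ) (n : ℕ) :
    eLpNorm (fun ω => ∑ i ∈ range n, d i ω) 1 μ ≤
      ENNReal.ofReal (μ.real Set.univ + ∑' i, ∫ ω, d i ω ^ 2 ∂μ) := by
  have hint := (hd.memLp_sum n).integrable one_le_two
  have hsq := (hd.memLp_sum n).integrable_sq
  rw [eLpNorm_one_eq_lintegral_enorm, ← ofReal_integral_norm_eq_lintegral_enorm hint]
  refine ENNReal.ofReal_le_ofReal ?_
  calc ∫ ω, ‖∑ i ∈ range n, d i ω‖ ∂μ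
      ≤ ∫ ω, (1 + (∑ i ∈ range n, d i ω) ^ 2) ∂μ := by
        refine integral_mono hint.norm ((integrable_const 1).add hsq) fun ω => ?_
        have hAMGM := two_mul_le_add_sq 1 |∑ i ∈ range n, d i ω|
        rw [sq_abs] at hAMGM
        simp only [Real.norm_eq_abs]
        linarith [abs_nonneg (∑ i ∈ range n, d i ω)]
    _ = μ.real Set.univ + ∑ i ∈ range n, ∫ ω, d i ω ^ 2 ∂μ := by
        rw [integral_add (integrable_const 1) hsq, hd.integral_sq_sum, integral_const,
          smul_eq_mul, mul_one]
    _ ≤ μ.real Set.univ + ∑' i, ∫ ω, d i ω ^ 2 ∂μ := by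
        gcongr
        exact hsum.sum_le_tsum _ fun i _ => integral_nonneg fun ω => sq_nonneg _

theorem ae_exists_tendsto_sum (hd : IsSqIntegrableMartingaleDifference d F μ)
    (hsum : Summable fun n => ∫ ω, d n ω ^ 2 ∂μ) :
    ∀ᵐ ω ∂μ, ∃ c, Tendsto (fun n => ∑ i ∈ range n, d i ω) atTop (𝓝 c) :=
  hd.martingale_sum.submartingale.exists_ae_tendsto_of_bdd (hd.eLpNorm_one_sum_le hsum)

/-- **Chow's strong law of large numbers** for square-integrable martingale differences. -/
theorem ae_isLittleO_sum (hd : IsSqIntegrableMartingaleDifference d F μ) {a : ℕ → ℝ}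
    (ha_mono : Monotone a) (ha_ne : ∀ n, a n ≠ 0) (ha_top : Tendsto a atTop atTop)
    (hsum : Summable fun n => (∫ ω, d n ω ^ 2 ∂μ) / a n ^ 2) :
    ∀ᵐ ω ∂μ, (fun n => ∑ i ∈ range n, d i ω) =o[atTop] a := by
  have hweighted : Summable fun n => ∫ ω, ((a n)⁻¹ * d n ω) ^ 2 ∂μ := by
    simpa only [mul_pow, integral_const_mul, inv_pow, div_eq_inv_mul] using hsum
  filter_upwards [(hd.const_mul fun n => (a n)⁻¹).ae_exists_tendsto_sum hweighted] with ω ⟨c, hc⟩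
  exact isLittleO_sum_of_tendsto_sum_inv_smul ha_mono ha_ne ha_top hc

end IsSqIntegrableMartingaleDifference

theorem ae_isLittleO_sum_sub_of_condExp_eq_const {μ : Measure Ω} [IsFiniteMeasure μ]
    {F : Filtration ℕ m0} {X : ℕ → Ω → ℝ} {c K : ℝ}
    (hmeas : ∀ n, StronglyMeasurable[F (n + 1)] (X n)) (hbdd : ∀ n, ∀ᵐ ω ∂μ, |X n ω| ≤ K)
    (hcond : ∀ n, μ[X n | F n] =ᵐ[μ] fun _ => c) :
    ∀ᵐ ω ∂μ, (fun n => ∑ i ∈ range n, (X i ω - c)) =o[atTop] fun n => (n : ℝ) := by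
  have hmeas' (n : ℕ) : AEStronglyMeasurable (X n) μ :=
    ((hmeas n).mono (F.le _)).aestronglyMeasurable
  have hd : IsSqIntegrableMartingaleDifference (fun n ω => X n ω - c) F μ :=
    { stronglyMeasurable := fun n => (hmeas n).sub stronglyMeasurable_const
      memLp_two := fun n => (MemLp.of_bound (hmeas' n) K (hbdd n)).sub (memLp_const c)
      condExp_eq_zero := fun n => by
        have hsub := condExp_sub (.of_bound (hmeas' n) K (hbdd n))
          (integrable_const (μ := μ) c) (F n)
        filter_upwards [hsub, hcond n] with ω hω hcω
        refine hω.trans ?_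
        rw [Pi.sub_apply, hcω, condExp_const (F.le n), sub_self, Pi.zero_apply] }
  have hvar (n : ℕ) : ∫ ω, (X n ω - c) ^ 2 ∂μ ≤ μ.real Set.univ * (K + |c|) ^ 2 := by
    rw [← smul_eq_mul, ← integral_const]
    refine integral_mono_ae (hd.memLp_two n).integrable_sq (integrable_const _) ?_
    filter_upwards [hbdd n] with ω hω
    rw [← sq_abs]
    gcongr
    exact (abs_sub _ _).trans (by gcongr)
  have hsum : Summable fun n : ℕ => (∫ ω, (X n ω - c) ^ 2 ∂μ) / ((n : ℝ) + 1) ^ 2 := by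
    have hinv : Summable fun n : ℕ => 1 / ((n : ℝ) + 1) ^ 2 := by
      exact_mod_cast (summable_nat_add_iff 1).2 (Real.summable_one_div_nat_pow.2 one_lt_two)
    refine .of_nonneg_of_le (fun n => by positivity) (fun n => ?_)
      (hinv.mul_left (μ.real Set.univ * (K + |c|) ^ 2))
    rw [mul_one_div]
    gcongr
    exact hvar n
  have hmono : Monotone fun n : ℕ => (n : ℝ) + 1 := fun m n hmn => by dsimp only; gcongr
  have htop : Tendsto (fun n : ℕ => (n : ℝ) + 1) atTop atTop :=
    tendsto_atTop_add_const_right _ _ tendsto_natCast_atTop_atTop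
  filter_upwards [hd.ae_isLittleO_sum hmono (fun n => by positivity) htop hsum] with ω hω
  refine hω.trans_isBigO ((isBigO_refl _ _).add (IsLittleO.isBigO ?_))
  exact isLittleO_const_left.2 (.inr (tendsto_norm_atTop_atTop.comp tendsto_natCast_atTop_atTop))

end MartingaleDifference

section AuxiliaryLinearProgram

variable {ι : Type*} [Fintype ι] {R : Matrix ι ι ℝ} {f : ℝ}

/-- The values `f` for which the auxiliary linear program has a feasible point `(w, f)`. Its
optimal value is the least element of this set. -/
def auxLPValues (R : Matrix ι ι ℝ) : Set ℝ :=
  {f | ∃ w ∈ stdSimplex ℝ ι, ∀ i, (R *ᵥ w) i ≤ f}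

lemma mulVec_le_diag_mul {i : ι} (hR : ∀ j, i ≠ j → R i j ≤ 0) {w : ι → ℝ}
    (hw : ∀ j, i ≠ j → 0 ≤ w j) : (R *ᵥ w) i ≤ R i i * w i := by
  classical
  have hoff : ∑ j ∈ univ.erase i, R i j * w j ≤ 0 := sum_nonpos fun j hj =>
    have hij := (ne_of_mem_erase hj).symm
    mul_nonpos_of_nonpos_of_nonneg (hR j hij) (hw j hij)
  rw [mulVec, dotProduct, ← add_sum_erase _ _ (mem_univ i)]
  linarith

lemma exists_mulVec_ge_of_mem_lowerBounds_auxLPValues (hf : f ∈ lowerBounds (auxLPValues R))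
    {w : ι → ℝ} (hw : w ∈ stdSimplex ℝ ι) : ∃ i, f ≤ (R *ᵥ w) i := by
  have : Nonempty ι := nonempty_of_sum_ne_zero (hw.2.trans_ne one_ne_zero) |>.to_type
  obtain ⟨i, hi⟩ := Finite.exists_max (R *ᵥ w)
  exact ⟨i, hf ⟨w, hw, hi⟩⟩

/-- If the constraint of `i` were slack, moving a little mass to `i` would lower every other
component and keep that of `i` below the optimum. -/
lemma mulVec_eq_of_mem_lowerBounds_auxLPValues {i : ι} (hR : ∀ k, k ≠ i → R k i < 0)
    (hf_nonneg : 0 ≤ f) (hf : f ∈ lowerBounds (auxLPValues R)) {w : ι → ℝ}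
    (hw : w ∈ stdSimplex ℝ ι) (hwf : ∀ k, (R *ᵥ w) k ≤ f) : (R *ᵥ w) i = f := by
  classical
  by_contra hne
  have hslack : (R *ᵥ w) i < f := (hwf i).lt_of_ne hne
  have hlim : Tendsto (fun η : ℝ => (1 - η) * (R *ᵥ w) i + η * R i i) (𝓝[>] 0)
      (𝓝 ((R *ᵥ w) i)) :=
    tendsto_nhdsWithin_of_tendsto_nhds <| Continuous.tendsto' (by fun_prop) _ _ (by ring)
  obtain ⟨η, hηi, hη_pos, hη_lt⟩ :=
    ((hlim.eventually_lt_const hslack).and (Ioo_mem_nhdsGT one_pos)).exists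
  set w' : ι → ℝ := (1 - η) • w + η • Pi.single i 1
  have hw' : w' ∈ stdSimplex ℝ ι := convex_stdSimplex ℝ ι hw (single_mem_stdSimplex ℝ i)
    (by linarith) hη_pos.le (by ring)
  obtain ⟨k, hk⟩ := exists_mulVec_ge_of_mem_lowerBounds_auxLPValues hf hw'
  have hmul : (R *ᵥ w') k = (1 - η) * (R *ᵥ w) k + η * R k i := by
    simp [w', mulVec_add, mulVec_smul]
  rw [hmul] at hk
  obtain rfl | hki := eq_or_ne k i
  · exact hk.not_gt hηi
  · have hsame : (1 - η) * (R *ᵥ w) k ≤ (1 - η) * f :=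
      mul_le_mul_of_nonneg_left (hwf k) (by linarith)
    linarith [mul_neg_of_pos_of_neg hη_pos (hR k hki), mul_nonneg hη_pos.le hf_nonneg]

lemma exists_pos_mulVec_eq_of_isLeast_auxLPValues (hR : ∀ i j, i ≠ j → R i j < 0)
    (hf_pos : 0 < f) (hf : IsLeast (auxLPValues R) f) :
    ∃ p ∈ stdSimplex ℝ ι, (∀ i, 0 < p i) ∧ ∀ i, (R *ᵥ p) i = f := by
  obtain ⟨p, hp, hpf⟩ := hf.1
  have htight (i : ι) : (R *ᵥ p) i = f :=
    mulVec_eq_of_mem_lowerBounds_auxLPValues (fun k => hR k i) hf_pos.le hf.2 hp hpf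
  refine ⟨p, hp, fun i => (hp.1 i).lt_of_ne' fun hzero => ?_, htight⟩
  have hdiag := mulVec_le_diag_mul (fun j hij => (hR i j hij).le) fun j _ => hp.1 j
  rw [htight, hzero, mul_zero] at hdiag
  exact hdiag.not_gt hf_pos

/-- The index is the one minimising `z i / p i`. -/
lemma exists_mulVec_nonpos_of_sum_eq_zero [Nonempty ι] (hR : ∀ i j, i ≠ j → R i j ≤ 0)
    (hf : 0 ≤ f) {p : ι → ℝ} (hp : ∀ i, 0 < p i) (hRp : ∀ i, (R *ᵥ p) i = f) {z : ι → ℝ}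
    (hz : ∑ i, z i = 0) : ∃ i, (R *ᵥ z) i ≤ 0 := by
  obtain ⟨i, hi⟩ := Finite.exists_min fun j => z j / p j
  set q := z i / p i
  have hq (j : ι) : 0 ≤ (z - q • p) j := by
    simpa [smul_eq_mul] using (le_div_iff₀ (hp j)).1 (hi j)
  have hqi : (z - q • p) i = 0 := by simp [q, (hp i).ne']
  have hq_nonpos : q ≤ 0 := by
    have hsum : q * ∑ j, p j ≤ 0 := by
      rw [mul_sum, ← hz]
      exact sum_le_sum fun j _ => sub_nonneg.1 (hq j)
    exact nonpos_of_mul_nonpos_left hsum (sum_pos (fun j _ => hp j) univ_nonempty)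
  have hdiag := mulVec_le_diag_mul (hR i) fun j _ => hq j
  rw [hqi, mul_zero, mulVec_sub, mulVec_smul, Pi.sub_apply, Pi.smul_apply, hRp, smul_eq_mul]
    at hdiag
  exact ⟨i, by linarith [mul_nonpos_of_nonpos_of_nonneg hq_nonpos hf]⟩

end AuxiliaryLinearProgram

section LittleO

lemma isLittleO_of_sum_eq_zero_of_eventually_le {ι α : Type*} [Fintype ι] {l : Filter α}
    {z : α → ι → ℝ} {g : α → ℝ} (hz : ∀ a, ∑ i, z a i = 0)
    (hle : ∀ η > 0, ∀ᶠ a in l, ∀ i, z a i ≤ η * |g a|) : z =o[l] g := by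
  classical
  refine isLittleO_pi.2 fun i => isLittleO_iff.2 fun c hc => ?_
  have hcard : 0 < (Fintype.card ι : ℝ) := Nat.cast_pos.2 (Fintype.card_pos_iff.2 ⟨i⟩)
  have hη : 0 < c / Fintype.card ι := div_pos hc hcard
  filter_upwards [hle _ hη, hle c hc] with a ha hac
  rw [Real.norm_eq_abs, Real.norm_eq_abs, abs_le]
  refine ⟨?_, hac i⟩
  have hrest : ∑ j ∈ univ.erase i, z a j ≤ c * |g a| := calc
    _ ≤ ∑ _j ∈ univ.erase i, c / Fintype.card ι * |g a| := sum_le_sum fun j _ => ha j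
    _ ≤ ∑ _j : ι, c / Fintype.card ι * |g a| :=
      sum_le_sum_of_subset_of_nonneg (erase_subset _ _) fun _ _ _ => by positivity
    _ = c * |g a| := by
      rw [sum_const, card_univ, nsmul_eq_mul, ← mul_assoc, mul_div_cancel₀ _ hcard.ne']
  linarith [hz a, add_sum_erase univ (z a) (mem_univ i)]

lemma exists_norm_le_add_mul_of_isLittleO {E : Type*} [NormedAddCommGroup E] {b : ℕ → E}
    {g : ℕ → ℝ} (hb : b =o[atTop] g) {η : ℝ} (hη : 0 < η) : ∃ K, ∀ n, ‖b n‖ ≤ K + η * ‖g n‖ := by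
  have hbdd : BddAbove (Set.range fun n => ‖b n‖ - η * ‖g n‖) :=
    IsBoundedUnder.bddAbove_range ⟨0, eventually_map.2 <|
      (isLittleO_iff.1 hb hη).mono fun n hn => sub_nonpos.2 hn⟩
  obtain ⟨K, hK⟩ := hbdd
  exact ⟨K, fun n => sub_le_iff_le_add.1 (hK ⟨n, rfl⟩)⟩

end LittleO

section GreedySelection

variable {ι : Type*} [DecidableEq ι]

/-- How far the numbers of selections in the first `n` slots exceed the ideal numbers `n • p`. -/
def selectionExcess (p : ι → ℝ) (sel : ℕ → ι) (n : ℕ) : ι → ℝ :=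
  ∑ t ∈ range n, (Pi.single (sel t) 1 - p)

lemma selectionExcess_succ (p : ι → ℝ) (sel : ℕ → ι) (n : ℕ) :
    selectionExcess p sel (n + 1) = selectionExcess p sel n + (Pi.single (sel n) 1 - p) :=
  sum_range_succ _ n

variable [Fintype ι] {R : Matrix ι ι ℝ} {f : ℝ} {p : ι → ℝ}

lemma sum_selectionExcess (hp : ∑ i, p i = 1) (sel : ℕ → ι) (n : ℕ) :
    ∑ i, selectionExcess p sel n i = 0 := by
  simp only [selectionExcess, Finset.sum_apply, Pi.sub_apply]
  rw [sum_comm]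
  simp [sum_sub_distrib, hp]

lemma add_single_sub_le_of_mulVec_le {i : ι} (hR : ∀ k, i ≠ k → R i k ≤ 0) (hf : 0 < f)
    (hp : ∀ k, 0 ≤ p k) (hRp : (R *ᵥ p) i = f) {z : ι → ℝ} {B : ℝ} (hz : ∀ j, z j ≤ B * p j)
    (hi : (R *ᵥ z) i ≤ B * f - R i i) (j : ι) :
    (z + (Pi.single i 1 - p) : ι → ℝ) j ≤ B * p j := by
  obtain rfl | hji := eq_or_ne j i
  swap
  · simpa [hji] using (hz j).trans (le_add_of_nonneg_right (hp j))
  have hgap (k : ι) : 0 ≤ (B • p - z) k := by simpa [smul_eq_mul] using hz k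
  have hdiag := mulVec_le_diag_mul hR fun k _ => hgap k
  rw [mulVec_sub, mulVec_smul, Pi.sub_apply, Pi.smul_apply, hRp, smul_eq_mul, Pi.sub_apply,
    Pi.smul_apply, smul_eq_mul] at hdiag
  have hRj : 0 < R j j := by
    have hdiag_p := mulVec_le_diag_mul hR fun k _ => hp k
    rw [hRp] at hdiag_p
    exact pos_of_mul_pos_left (hf.trans_le hdiag_p) (hp j)
  have hone : 1 ≤ B * p j - z j := le_of_mul_le_mul_left (by linarith) hRj
  simp only [Pi.add_apply, Pi.sub_apply, Pi.single_eq_same]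
  linarith [hp j]

theorem selectionExcess_le (hR : ∀ i j, i ≠ j → R i j ≤ 0) (hf : 0 < f)
    (hp : ∀ i, 0 < p i) (hp_sum : ∑ i, p i = 1) (hRp : ∀ i, (R *ᵥ p) i = f) {sel : ℕ → ι}
    {B E : ℝ} (hB : 0 ≤ B) (hBE : ∀ i, E + R i i ≤ B * f) {n : ℕ}
    (hsel : ∀ t < n, ∀ l, (R *ᵥ selectionExcess p sel t) (sel t) ≤
      (R *ᵥ selectionExcess p sel t) l + E) (j : ι) :
    selectionExcess p sel n j ≤ B * p j := by
  have : Nonempty ι := ⟨j⟩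
  induction n generalizing j with
  | zero => simpa [selectionExcess] using mul_nonneg hB (hp j).le
  | succ n ih =>
    obtain ⟨l, hl⟩ := exists_mulVec_nonpos_of_sum_eq_zero hR hf.le hp hRp
      (sum_selectionExcess hp_sum sel n)
    rw [selectionExcess_succ]
    refine add_single_sub_le_of_mulVec_le (hR _) hf (fun k => (hp k).le) (hRp _)
      (ih fun t ht => hsel t (ht.trans n.lt_succ_self)) ?_ j
    linarith [hsel n n.lt_succ_self l, hBE (sel n)]

theorem selectionExcess_isLittleO (hR : ∀ i j, i ≠ j → R i j ≤ 0) (hf : 0 < f)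
    (hp : ∀ i, 0 < p i) (hp_sum : ∑ i, p i = 1) (hRp : ∀ i, (R *ᵥ p) i = f) {sel : ℕ → ι}
    {b : ℕ → ι → ℝ} (hb : b =o[atTop] fun n => (n : ℝ))
    (hsel : ∀ n l, b n l - (R *ᵥ selectionExcess p sel n) l ≤
      b n (sel n) - (R *ᵥ selectionExcess p sel n) (sel n)) :
    selectionExcess p sel =o[atTop] fun n => (n : ℝ) := by
  refine isLittleO_of_sum_eq_zero_of_eventually_le (sum_selectionExcess hp_sum sel) fun η hη => ?_
  obtain ⟨K, hK⟩ := exists_norm_le_add_mul_of_isLittleO hb (by positivity : 0 < η * f / 4)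
  obtain ⟨c, hc⟩ := Finite.bddAbove_range fun i => R i i
  have hlarge : ∀ᶠ n : ℕ in atTop, 2 * |K| + |c| ≤ η * f / 2 * n :=
    (tendsto_natCast_atTop_atTop.const_mul_atTop (by positivity)).eventually_ge_atTop _
  filter_upwards [hlarge] with n hn j
  have hgreedy : ∀ t < n, ∀ l, (R *ᵥ selectionExcess p sel t) (sel t) ≤
      (R *ᵥ selectionExcess p sel t) l + 2 * (|K| + η * f / 4 * n) := fun t ht l => by
    have hbound (i : ι) : |b t i| ≤ |K| + η * f / 4 * n := by
      refine ((norm_le_pi_norm (b t) i).trans (hK t)).trans ?_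
      rw [Real.norm_natCast]
      gcongr
      exact le_abs_self K
    linarith [hsel t l, neg_le_of_abs_le (hbound l), le_of_abs_le (hbound (sel t))]
  have hp_le : p j ≤ 1 := hp_sum ▸ single_le_sum (fun i _ => (hp i).le) (mem_univ j)
  calc selectionExcess p sel n j ≤ η * n * p j :=
        selectionExcess_le hR hf hp hp_sum hRp (by positivity)
          (fun i => by linarith [hc ⟨i, rfl⟩, le_abs_self c]) hgreedy j
    _ ≤ η * n := mul_le_of_le_one_right (by positivity) hp_le
    _ = η * |(n : ℝ)| := by rw [Nat.abs_cast]

end GreedySelection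

section FirstCrossing

variable {ι : Type*} [Finite ι] {y : ℕ → ι → ℝ} {a : ℝ} {L : ℝ → ℕ}

lemma tendsto_atTop_of_exists_lt (hL : ∀ e, ∃ i, e < y (L e + 1) i) : Tendsto L atTop atTop := by
  refine tendsto_atTop.2 fun N => ?_
  have hlevel : ∀ᶠ e : ℝ in atTop, ∀ n ∈ range N, ∀ i, y (n + 1) i ≤ e :=
    (eventually_all_finset _).2 fun n _ => eventually_all.2 fun i => eventually_ge_atTop _
  filter_upwards [hlevel] with e he
  by_contra! hlt
  obtain ⟨i, hi⟩ := hL e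
  exact (he (L e) (mem_range.2 hlt) i).not_gt hi

theorem tendsto_div_of_le_of_exists_lt [Nonempty ι]
    (hy : ∀ i, Tendsto (fun n : ℕ => y n i / n) atTop (𝓝 a))
    (hbefore : ∀ e, 2 ≤ L e → ∀ i, y (L e) i ≤ e) (hafter : ∀ e, ∃ i, e < y (L e + 1) i) :
    Tendsto (fun e : ℝ => e / L e) atTop (𝓝 a) := by
  have hL := tendsto_atTop_of_exists_lt hafter
  have hy_succ (i : ι) : Tendsto (fun n : ℕ => y (n + 1) i / n) atTop (𝓝 a) := by
    have hshift : Tendsto (fun n : ℕ => y (n + 1) i / (n + 1 : ℕ)) atTop (𝓝 a) :=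
      (hy i).comp (tendsto_add_atTop_nat 1)
    have hratio : Tendsto (fun n : ℕ => ((n + 1 : ℕ) : ℝ) / n) atTop (𝓝 1) := by
      simpa [add_comm] using
        tendsto_add_mul_div_add_mul_atTop_nhds (1 : ℝ) 0 1 (one_ne_zero : (1 : ℝ) ≠ 0)
    have := hshift.mul hratio
    rw [mul_one] at this
    refine this.congr fun n => ?_
    rw [div_mul_div_cancel₀ (by positivity)]
  refine tendsto_order.2 ⟨fun b hb => ?_, fun b hb => ?_⟩
  · obtain ⟨i⟩ := ‹Nonempty ι›
    filter_upwards [hL.eventually ((hy i).eventually_const_lt hb), hL.eventually_ge_atTop 2]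
      with e hlt htwo
    exact hlt.trans_le (by gcongr; exact hbefore e htwo i)
  · filter_upwards [hL.eventually (eventually_all.2 fun i => (hy_succ i).eventually_lt_const hb)]
      with e hlt
    obtain ⟨i, hi⟩ := hafter e
    exact (by gcongr : e / L e ≤ y (L e + 1) i / L e).trans_lt (hlt i)

end FirstCrossing

section EnergyDynamics

variable {M : ℕ} {τ : ℝ} {C : Matrix (Fin M) (Fin M) ℝ} {s v : ℕ → Fin M → ℝ}

lemma IsDecision.exists_eq_single {w : Fin M → ℝ} (hw : IsDecision w) :
    ∃ i, w = Pi.single i 1 := by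
  have hnonneg (j : Fin M) : 0 ≤ w j := by
    obtain hj | hj := hw.1 j <;> simp [hj]
  obtain ⟨i, -, hi⟩ := exists_ne_zero_of_sum_ne_zero (hw.2.trans_ne one_ne_zero)
  have hi_one : w i = 1 := (hw.1 i).resolve_left hi
  have hrest : ∑ j ∈ univ.erase i, w j = 0 := by
    linarith [hw.2, add_sum_erase univ w (mem_univ i)]
  refine ⟨i, funext fun j => ?_⟩
  obtain rfl | hji := eq_or_ne j i
  · rw [hi_one, Pi.single_eq_same]
  · rw [Pi.single_eq_of_ne hji]
    exact (sum_eq_zero_iff_of_nonneg fun k _ => hnonneg k).1 hrest j (by simp [hji])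

lemma energyVec_eq_add (e0 : ℝ) (n : ℕ) (m : Fin M) :
    energyVec τ C e0 s v n m = e0 + energyVec τ C 0 s v n m := by
  simp only [energyVec]
  ring

lemma energyVec_succ (e0 : ℝ) (n : ℕ) (m : Fin M) :
    energyVec τ C e0 s v (n + 1) m =
      energyVec τ C e0 s v n m + τ * (s (n + 1) m - (C *ᵥ v (n + 1)) m) := by
  simp only [energyVec, sum_Icc_succ_top n.succ_pos, mulVec_add, Pi.add_apply]
  ring

lemma energyVec_eq_of_mulVec_eq {sbar p : Fin M → ℝ} {f : ℝ}
    (hp : ∀ i, ((C - Matrix.of fun i _ => sbar i) *ᵥ p) i = f) {sel : ℕ → Fin M}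
    (hv : ∀ t, v (t + 1) = Pi.single (sel t) 1) (e0 : ℝ) (n : ℕ) (m : Fin M) :
    energyVec τ C e0 s v n m = e0 + τ * ((∑ t ∈ range n, (s (t + 1) - sbar)) m -
      ((C - Matrix.of fun i _ => sbar i) *ᵥ selectionExcess p sel n) m - n * f) := by
  induction n with
  | zero => simp [energyVec, selectionExcess]
  | succ n ih =>
    rw [energyVec_succ, ih, hv, selectionExcess_succ, sum_range_succ, mulVec_add, mulVec_sub]
    simp only [Pi.add_apply, Pi.sub_apply, hp, mulVec_single_one, col_apply, Matrix.sub_apply,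
      of_apply, Nat.cast_succ]
    ring

theorem tendsto_energyVec_div_of_highest_energy_first {sbar p : Fin M → ℝ} {f : ℝ} (hτ : 0 < τ)
    (hR : ∀ i j, i ≠ j → C i j - sbar i ≤ 0) (hf : 0 < f) (hp : ∀ i, 0 < p i)
    (hp_sum : ∑ i, p i = 1) (hRp : ∀ i, ((C - Matrix.of fun i _ => sbar i) *ᵥ p) i = f)
    (hs : (fun n => ∑ t ∈ range n, (s (t + 1) - sbar)) =o[atTop] fun n => (n : ℝ))
    {sel : ℕ → Fin M} (hv : ∀ t, v (t + 1) = Pi.single (sel t) 1)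
    (hsel : ∀ n l, energyVec τ C 0 s v n l ≤ energyVec τ C 0 s v n (sel n)) (m : Fin M) :
    Tendsto (fun n : ℕ => energyVec τ C 0 s v n m / n) atTop (𝓝 (-(τ * f))) := by
  have henergy := energyVec_eq_of_mulVec_eq (τ := τ) (s := s) hRp hv 0
  have hexcess : selectionExcess p sel =o[atTop] fun n => (n : ℝ) := by
    refine selectionExcess_isLittleO hR hf hp hp_sum hRp hs fun n l => ?_
    have hgreedy := hsel n l
    rw [henergy, henergy, zero_add, zero_add] at hgreedy
    exact (sub_le_sub_iff_right _).1 (le_of_mul_le_mul_left hgreedy hτ)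
  have hdev : (fun n => energyVec τ C 0 s v n m + τ * f * n) =o[atTop] fun n => (n : ℝ) := by
    have hmul : (fun n => ((C - Matrix.of fun i _ => sbar i) *ᵥ selectionExcess p sel n) m)
        =o[atTop] fun n => (n : ℝ) := by
      simp only [mulVec, dotProduct]
      exact IsLittleO.fun_sum fun j _ => (isLittleO_pi.1 hexcess j).const_mul_left _
    refine (((isLittleO_pi.1 hs m).sub hmul).const_mul_left τ).congr_left fun n => ?_
    rw [henergy]
    ring
  have hlim := hdev.tendsto_div_nhds_zero.sub_const (τ * f)
  rw [zero_sub] at hlim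
  refine hlim.congr' ?_
  filter_upwards [eventually_ne_atTop 0] with n hn
  have : (n : ℝ) ≠ 0 := Nat.cast_ne_zero.2 hn
  field_simp
  ring

end EnergyDynamics

section Lifetime

variable {M : ℕ} {τ e0 : ℝ} {C : Matrix (Fin M) (Fin M) ℝ} {s v : ℕ → Fin M → ℝ}

lemma lifetime_le {n : ℕ} (hn : 1 ≤ n) {m : Fin M}
    (hneg : energyVec τ C e0 s v (n + 1) m < 0) : lifetime τ C e0 s v ≤ n :=
  sInf_le ⟨n, rfl, hn, m, hneg⟩

lemma exists_energyVec_toNat_lifetime_succ_neg (h : lifetime τ C e0 s v ≠ ⊤) :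
    ∃ m, energyVec τ C e0 s v ((lifetime τ C e0 s v).toNat + 1) m < 0 := by
  have hne : {x : ℕ∞ | ∃ n : ℕ, x = n ∧ 1 ≤ n ∧ ∃ m, energyVec τ C e0 s v (n + 1) m < 0}.Nonempty :=
    Set.nonempty_iff_ne_empty.2 fun hempty => h (by rw [lifetime, hempty, sInf_empty])
  obtain ⟨n, hn, -, hneg⟩ : lifetime τ C e0 s v ∈ _ := csInf_mem hne
  rwa [hn, ENat.toNat_natCast]

lemma energyVec_toNat_lifetime_nonneg (h : 2 ≤ (lifetime τ C e0 s v).toNat) (m : Fin M) :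
    0 ≤ energyVec τ C e0 s v (lifetime τ C e0 s v).toNat m := by
  obtain ⟨k, hk⟩ := Nat.exists_eq_add_of_le' (one_le_two.trans h)
  by_contra! hneg
  rw [hk] at hneg
  have hle := ENat.toNat_le_of_le_natCast (lifetime_le (by omega) hneg)
  omega

theorem lifetime_ne_top_of_tendsto_energyVec_div {a : ℝ} (ha : 0 < a) (m : Fin M)
    (h : Tendsto (fun n : ℕ => energyVec τ C 0 s v n m / n) atTop (𝓝 (-a))) (e0 : ℝ) :
    lifetime τ C e0 s v ≠ ⊤ := by
  have hbot : Tendsto (fun n : ℕ => energyVec τ C 0 s v n m / n * n) atTop atBot :=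
    h.neg_mul_atTop (neg_neg_of_pos ha) tendsto_natCast_atTop_atTop
  obtain ⟨n, hn_neg, hn_two⟩ :=
    ((hbot.eventually_lt_atBot (-e0)).and (eventually_ge_atTop 2)).exists
  obtain ⟨k, rfl⟩ := Nat.exists_eq_add_of_le' (one_le_two.trans hn_two)
  rw [div_mul_cancel₀ _ (by positivity)] at hn_neg
  have hneg : energyVec τ C e0 s v (k + 1) m < 0 := by
    rw [energyVec_eq_add]
    linarith
  exact ne_top_of_le_ne_top (ENat.natCast_ne_top k) (lifetime_le (by omega) hneg)

theorem tendsto_lifetime_div_of_tendsto_energyVec_div [NeZero M] {a : ℝ} (ha : 0 < a)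
    (h : ∀ m, Tendsto (fun n : ℕ => energyVec τ C 0 s v n m / n) atTop (𝓝 (-a))) :
    Tendsto (fun e0 : ℝ => ((lifetime τ C e0 s v).toNat : ℝ) / (e0 / a)) atTop (𝓝 1) := by
  have hdrift (m : Fin M) : Tendsto (fun n : ℕ => -energyVec τ C 0 s v n m / n) atTop (𝓝 a) := by
    simpa only [neg_div, neg_neg] using (h m).neg
  have hratio : Tendsto (fun e0 : ℝ => e0 / (lifetime τ C e0 s v).toNat) atTop (𝓝 a) := by
    refine tendsto_div_of_le_of_exists_lt hdrift (fun e0 htwo m => ?_) fun e0 => ?_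
    · have hnonneg := energyVec_toNat_lifetime_nonneg htwo m
      rw [energyVec_eq_add] at hnonneg
      linarith
    · obtain ⟨m, hneg⟩ := exists_energyVec_toNat_lifetime_succ_neg
        (lifetime_ne_top_of_tendsto_energyVec_div ha 0 (h 0) e0)
      rw [energyVec_eq_add] at hneg
      exact ⟨m, by linarith⟩
  have hinv := (hratio.inv₀ ha.ne').const_mul a
  rw [mul_inv_cancel₀ ha.ne'] at hinv
  refine hinv.congr fun e0 => ?_
  rw [inv_div, div_div_eq_mul_div, mul_comm a, div_mul_eq_mul_div]

end Lifetime

section AlmostSure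

variable {Ω : Type*} {m0 : MeasurableSpace Ω} {μ : Measure Ω}

lemma tendsto_measure_of_ae_eventually {α : Type*} [Preorder α] [IsDirectedOrder α] [Nonempty α]
    [(atTop : Filter α).IsCountablyGenerated] {P : α → Ω → Prop}
    (h : ∀ᵐ ω ∂μ, ∀ᶠ a in atTop, P a ω) :
    Tendsto (fun a => μ {ω | P a ω}) atTop (𝓝 (μ Set.univ)) := by
  have hmono : Monotone fun a => {ω | ∀ b ≥ a, P b ω} := fun a a' ha ω hω b hb =>
    hω b (ha.trans hb)
  have hunion : μ (⋃ a, {ω | ∀ b ≥ a, P b ω}) = μ Set.univ := by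
    refine measure_congr (eventuallyEq_univ.2 ?_)
    filter_upwards [h] with ω hω
    exact Set.mem_iUnion.2 (eventually_atTop.1 hω)
  have hlim := tendsto_measure_iUnion_atTop (μ := μ) hmono
  rw [hunion] at hlim
  exact tendsto_of_tendsto_of_tendsto_of_le_of_le hlim tendsto_const_nhds
    (fun a => measure_mono fun ω hω => hω a le_rfl) fun a => measure_mono (Set.subset_univ _)

/-- The history `σ(s 1, …, s n)` of a process observed from time `1` on. Mathlib's natural
filtration is not used because it would also contain `σ(s 0)`. -/
def historyFiltration {E : Type*} [MeasurableSpace E] (s : ℕ → Ω → E)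
    (hs : ∀ n, Measurable (s n)) : Filtration ℕ m0 where
  seq n := ⨆ i ∈ Finset.Icc 1 n, MeasurableSpace.comap (s i) inferInstance
  mono' _ _ hmn := biSup_mono fun _ hi => Icc_subset_Icc_right hmn hi
  le' _ := iSup₂_le fun i _ => (hs i).comap_le

lemma measurable_historyFiltration {E : Type*} [MeasurableSpace E] {s : ℕ → Ω → E}
    (hs : ∀ n, Measurable (s n)) (n : ℕ) : Measurable[historyFiltration s hs (n + 1)] (s (n + 1)) :=
  (comap_measurable (s (n + 1))).mono
    (le_biSup (fun i => MeasurableSpace.comap (s i) inferInstance) (by simp)) le_rfl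

variable {ι : Type*} [Fintype ι]

theorem ae_isLittleO_sum_sub_of_condExp_eq_const_pi [IsFiniteMeasure μ] {F : Filtration ℕ m0}
    {X : ℕ → Ω → ι → ℝ} {c : ι → ℝ} {K : ℝ} (hmeas : ∀ n, StronglyMeasurable[F (n + 1)] (X n))
    (hbdd : ∀ n, ∀ᵐ ω ∂μ, ∀ i, |X n ω i| ≤ K) (hcond : ∀ n, μ[X n | F n] =ᵐ[μ] fun _ => c) :
    ∀ᵐ ω ∂μ, (fun n => ∑ t ∈ range n, (X t ω - c)) =o[atTop] fun n => (n : ℝ) := by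
  have hcoord (i : ι) : ∀ᵐ ω ∂μ,
      (fun n => ∑ t ∈ range n, (X t ω i - c i)) =o[atTop] fun n => (n : ℝ) := by
    let π : (ι → ℝ) →L[ℝ] ℝ := ContinuousLinearMap.proj i
    refine ae_isLittleO_sum_sub_of_condExp_eq_const (F := F)
      (fun n => π.continuous.comp_stronglyMeasurable (hmeas n))
      (fun n => (hbdd n).mono fun ω hω => hω i) fun n => ?_
    have hint : Integrable (X n) μ := by
      refine .of_bound ((hmeas n).mono (F.le _)).aestronglyMeasurable |K| ?_
      filter_upwards [hbdd n] with ω hω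
      exact (pi_norm_le_iff_of_nonneg (abs_nonneg K)).2 fun j => (hω j).trans (le_abs_self K)
    filter_upwards [π.comp_condExp_comm (m := F n) hint, hcond n] with ω hcomm hω
    exact hcomm.symm.trans (congrArg π hω)
  filter_upwards [ae_all_iff.2 hcoord] with ω hω
  refine isLittleO_pi.2 fun i => (hω i).congr_left fun n => ?_
  simp only [Finset.sum_apply, Pi.sub_apply]

end AlmostSure

theorem hef_lifetime_ratio_of_fstar_pos_general
    {M : ℕ} {τ : ℝ} (hτ : 0 < τ) {C : Matrix (Fin M) (Fin M) ℝ} {sbar : Fin M → ℝ} {S : ℝ}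
    {fstar : ℝ} (hfstar : 0 < fstar)
    (hattain : ∃ w : Fin M → ℝ, (∀ m, 0 ≤ w m) ∧ ∑ m, w m = 1 ∧
      ∀ m, ((C - Matrix.of fun i _ => sbar i) *ᵥ w) m ≤ fstar)
    (hopt : ∀ (w : Fin M → ℝ) (f : ℝ), (∀ m, 0 ≤ w m) → ∑ m, w m = 1 →
      (∀ m, ((C - Matrix.of fun i _ => sbar i) *ᵥ w) m ≤ f) → fstar ≤ f)
    (hD3 : ∀ i j, i ≠ j → C i j - sbar i < 0)
    {Ω : Type*} {m0 : MeasurableSpace Ω} {μ : Measure Ω} [IsFiniteMeasure μ]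
    {s : ℕ → Ω → Fin M → ℝ} (hmeas : ∀ n, Measurable (s n))
    (hD1 : ∀ n, 1 ≤ n → μ[s n | ⨆ i ∈ Finset.Icc 1 (n - 1),
      MeasurableSpace.comap (s i) inferInstance] =ᵐ[μ] fun _ => sbar)
    (hbdd : ∀ n, 1 ≤ n → ∀ᵐ ω ∂μ, ∀ m, |s n ω m| ≤ S)
    {v : ℕ → Ω → Fin M → ℝ} (hvdec : ∀ n ω, IsDecision (v n ω))
    (hvhef : ∀ (e0 : ℝ) (n : ℕ), 1 ≤ n → ∀ ω m, v n ω m = 1 → ∀ l,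
      energyVec τ C e0 (s · ω) (v · ω) (n - 1) l ≤ energyVec τ C e0 (s · ω) (v · ω) (n - 1) m) :
    ∀ᵐ ω ∂μ, (∀ e0, lifetime τ C e0 (s · ω) (v · ω) ≠ ⊤) ∧
      Tendsto (fun e0 => ((lifetime τ C e0 (s · ω) (v · ω)).toNat : ℝ) / (e0 / (τ * fstar)))
        atTop (𝓝 1) := by
  have hLP : IsLeast (auxLPValues (C - Matrix.of fun i _ => sbar i)) fstar :=
    ⟨hattain.imp fun w ⟨hw_nonneg, hw_sum, hw⟩ => ⟨⟨hw_nonneg, hw_sum⟩, hw⟩,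
      fun f ⟨w, hw, hwf⟩ => hopt w f hw.1 hw.2 hwf⟩
  obtain ⟨p, hp, hp_pos, hRp⟩ := exists_pos_mulVec_eq_of_isLeast_auxLPValues hD3 hfstar hLP
  have : NeZero M := ⟨by rintro rfl; simpa using hp.2⟩
  have hnoise : ∀ᵐ ω ∂μ,
      (fun n => ∑ t ∈ range n, (s (t + 1) ω - sbar)) =o[atTop] fun n => (n : ℝ) :=
    ae_isLittleO_sum_sub_of_condExp_eq_const_pi (F := historyFiltration s hmeas)
      (fun n => (measurable_historyFiltration hmeas n).stronglyMeasurable)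
      (fun n => hbdd (n + 1) n.succ_pos) fun n => hD1 (n + 1) n.succ_pos
  choose sel hsel using fun n ω => (hvdec (n + 1) ω).exists_eq_single
  filter_upwards [hnoise] with ω hω
  have hdrift := tendsto_energyVec_div_of_highest_energy_first hτ (fun i j hij => (hD3 i j hij).le)
    hfstar hp_pos hp.2 hRp hω (hsel · ω)
    fun n => hvhef 0 (n + 1) n.succ_pos ω _ (by simp [hsel n ω])
  have hτf := mul_pos hτ hfstar
  exact ⟨lifetime_ne_top_of_tendsto_energyVec_div hτf 0 (hdrift 0),
    tendsto_lifetime_div_of_tendsto_energyVec_div hτf hdrift⟩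

/-- If `f* > 0` and (D1)–(D4) hold, then for any `δ > 0` and any HEF process,
`P(N_hef < ∞ and |N_hef/(e0/(τ f*)) − 1| < δ) → 1` as `e0 → ∞`. -/
theorem hef_lifetime_ratio_of_fstar_pos
    {M : ℕ} (hM : 2 ≤ M)
    (τ : ℝ) (hτ : 0 < τ)
    (C : Matrix (Fin M) (Fin M) ℝ) (hC : ∀ i j, 0 ≤ C i j)
    (sbar : Fin M → ℝ) (S : ℝ) (hS : 0 < S)
    (hsbarS : ∀ m, 0 ≤ sbar m ∧ sbar m ≤ S)
    (fstar : ℝ) (hfstar : 0 < fstar)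
    -- `f*` is attained by a feasible point of the auxiliary LP (with `R = C − s̄·uᵀ`)
    (hattain : ∃ vbar : Fin M → ℝ, (∀ m, 0 ≤ vbar m) ∧ (∑ m, vbar m) = 1 ∧
      ∀ m, (C - Matrix.of fun i _ => sbar i).mulVec vbar m ≤ fstar)
    -- and is optimal for it
    (hopt : ∀ (vbar : Fin M → ℝ) (f : ℝ), (∀ m, 0 ≤ vbar m) → (∑ m, vbar m) = 1 →
      (∀ m, (C - Matrix.of fun i _ => sbar i).mulVec vbar m ≤ f) → fstar ≤ f)
    -- (D3): every passive BS gains energy in expectation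
    (hD3 : ∀ i j, i ≠ j → C i j - sbar i < 0)
    -- (D4): `C` is invertible with `(Cᵀ)⁻¹·u > 0` componentwise
    (hCdet : IsUnit C.det)
    (hD4 : ∀ m, 0 < (Matrix.transpose C)⁻¹.mulVec (fun _ => (1 : ℝ)) m)
    {Ω : Type*} {m0 : MeasurableSpace Ω} (μ : Measure Ω) [IsProbabilityMeasure μ]
    (s : ℕ → Ω → Fin M → ℝ) (hmeas : ∀ n, Measurable (s n))
    -- (D1): constant conditional expectation given the past
    (hD1 : ∀ n, 1 ≤ n →
      (μ[s n | ⨆ i ∈ Finset.Icc 1 (n-1), MeasurableSpace.comap (s i) inferInstance]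
        =ᵐ[μ] (fun _ => sbar)))
    -- (D2): boundedness
    (hD2 : ∀ n, 1 ≤ n → ∀ᵐ ω ∂μ, ∀ m, 0 ≤ s n ω m ∧ s n ω m ≤ S)
    (δ : ℝ) (hδ : 0 < δ)
    -- an HEF process:
    (v : ℕ → Ω → Fin M → ℝ)
    (hvdec : ∀ n ω, IsDecision (v n ω))
    -- each `v^(n)` is measurable w.r.t. `σ(s^(1),…,s^(n−1))`
    (hvmeas : ∀ n, 1 ≤ n →
      Measurable[⨆ i ∈ Finset.Icc 1 (n-1), MeasurableSpace.comap (s i) inferInstance] (v n))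
    -- highest-energy-first selection rule
    (hvhef : ∀ (e0 : ℝ) (n : ℕ), 1 ≤ n → ∀ (ω : Ω) (m : Fin M), v n ω m = 1 →
      ∀ l, energyVec τ C e0 (fun t => s t ω) (fun t => v t ω) (n-1) l ≤
           energyVec τ C e0 (fun t => s t ω) (fun t => v t ω) (n-1) m) :
    Tendsto (fun e0 : ℝ => μ {ω |
        lifetime τ C e0 (fun t => s t ω) (fun t => v t ω) ≠ ⊤ ∧
        |((lifetime τ C e0 (fun t => s t ω) (fun t => v t ω)).toNat : ℝ) /
            (e0 / (τ * fstar)) - 1| < δ})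
      atTop (nhds 1) := by
  have hratio := hef_lifetime_ratio_of_fstar_pos_general hτ hfstar hattain hopt hD3 hmeas hD1
    (fun n hn => (hD2 n hn).mono fun ω hω m => (abs_of_nonneg (hω m).1).trans_le (hω m).2)
    hvdec hvhef
  exact measure_univ (μ := μ) ▸ tendsto_measure_of_ae_eventually (hratio.mono fun ω hω =>
    (hω.2.eventually (Metric.ball_mem_nhds 1 hδ)).mono fun e0 => And.intro (hω.1 e0))
end
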